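/- For every integer n ≥ 1 and every r ∈ (0, π/2), one has lim_{t→0⁺} (4πt)^{2n+3/2}·(sin r/r)^{2n+1}·(1 − r·cot r)^{3/2}·e^{r²/(4t)}·p_t(r, 0) = 1; that is, p_t(r,0) ∼ (1/(4πt)^{2n+3/2})·(r/sin r)^{2n+1}·e^{−r²/(4t)}·(1 − r·cot r)^{−3/2} as t → 0⁺. (Note that 1 − r·cot r > 0 for r ∈ (0, π/2).) -/

import Mathlib

open Real MeasureTheory Filter Topology Set

noncomputable section

/-- The defining formula of the Jacobi polynomial `P_k^{(α,β)}` on `(-1,1)`. -/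
def jacobiFormula (k α β : ℕ) (x : ℝ) : ℝ :=
  ((-1 : ℝ) ^ k / (2 ^ k * Nat.factorial k)) * (1 - x) ^ (-(α : ℤ)) * (1 + x) ^ (-(β : ℤ)) *
    iteratedDeriv k (fun y => (1 - y) ^ (α + k) * (1 + y) ^ (β + k)) x

/-- `J k α β` is the Jacobi polynomial `P_k^{(α,β)}`: a polynomial function satisfying the
defining formula on `(-1,1)`. -/
def IsJacobi (J : ℕ → ℕ → ℕ → ℝ → ℝ) : Prop :=
  ∀ k α β : ℕ, (∃ p : Polynomial ℝ, ∀ x : ℝ, J k α β x = p.eval x) ∧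
    ∀ x ∈ Set.Ioo (-1 : ℝ) 1, J k α β x = jacobiFormula k α β x

/-- The vertical factor `sin((m+1)η)/sin η`, extended by its limit `m+1` at `η = 0`. -/
def vertFactor (m : ℕ) (η : ℝ) : ℝ :=
  if η = 0 then (m + 1 : ℝ) else Real.sin ((m + 1) * η) / Real.sin η

/-- The general term of the double series defining the subelliptic heat kernel of the
quaternionic Hopf fibration on `S^{4n+3}`. -/
def pTerm (n : ℕ) (J : ℕ → ℕ → ℕ → ℝ → ℝ) (t r η : ℝ) (mk : ℕ × ℕ) : ℝ :=
  (Real.Gamma (2 * n) / (2 * Real.pi ^ (2 * n + 2))) *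
    (2 * (mk.2 : ℝ) + mk.1 + 2 * n + 1) * ((mk.1 : ℝ) + 1) *
    (Nat.choose (mk.2 + mk.1 + 2 * n) (2 * n - 1) : ℝ) *
    Real.exp (-(4 * ((mk.2 : ℝ) * (mk.2 + 2 * n + mk.1 + 1) + n * mk.1)) * t) *
    vertFactor mk.1 η * Real.cos r ^ mk.1 * J mk.2 (2 * n - 1) (mk.1 + 1) (Real.cos (2 * r))

/-- The subelliptic heat kernel of the quaternionic Hopf fibration on `S^{4n+3}`. -/
def pKernel (n : ℕ) (J : ℕ → ℕ → ℕ → ℝ → ℝ) (t r η : ℝ) : ℝ :=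
  ∑' mk : ℕ × ℕ, pTerm n J t r η mk

/-- The defining formula of the Gegenbauer polynomial `C_m^{2n+1}` on `(-1,1)`. -/
def gegenbauerFormula (n m : ℕ) (x : ℝ) : ℝ :=
  ((-1 : ℝ) ^ m / 2 ^ m) *
    (Real.Gamma ((m : ℝ) + 4 * n + 2) * Real.Gamma (2 * (n : ℝ) + 3 / 2) /
      (Real.Gamma (4 * (n : ℝ) + 2) * Real.Gamma ((m : ℝ) + 1) *
        Real.Gamma (2 * (n : ℝ) + m + 3 / 2))) *
    (1 - x ^ 2) ^ (-(2 * (n : ℝ) + 1 / 2)) *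
    iteratedDeriv m (fun y => (1 - y ^ 2) ^ (2 * (n : ℝ) + m + 1 / 2)) x

/-- `C m` is the Gegenbauer polynomial `C_m^{2n+1}`. -/
def IsGegenbauer (n : ℕ) (C : ℕ → ℝ → ℝ) : Prop :=
  ∀ m : ℕ, (∃ p : Polynomial ℝ, ∀ x : ℝ, C m x = p.eval x) ∧
    ∀ x ∈ Set.Ioo (-1 : ℝ) 1, C m x = gegenbauerFormula n m x

/-- The Riemannian heat kernel of `S^{4n+3}`. -/
def qKernel (n : ℕ) (C : ℕ → ℝ → ℝ) (t x : ℝ) : ℝ :=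
  (Real.Gamma (2 * n + 1) / (2 * Real.pi ^ (2 * n + 2))) *
    ∑' m : ℕ, ((m : ℝ) + 2 * n + 1) * Real.exp (-((m : ℝ) * (m + 4 * n + 2)) * t) * C m x

/-- The general term of the double series defining the subelliptic heat kernel on `CP^{2n+1}`. -/
def hTerm (n : ℕ) (J : ℕ → ℕ → ℕ → ℝ → ℝ) (t r φ : ℝ) (mk : ℕ × ℕ) : ℝ :=
  (Real.Gamma (2 * n) / (4 * Real.pi ^ (2 * n + 2))) *
    (2 * (mk.2 : ℝ) + 2 * mk.1 + 2 * n + 1) * (2 * (mk.1 : ℝ) + 1) *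
    (Nat.choose (mk.2 + 2 * mk.1 + 2 * n) (2 * n - 1) : ℝ) *
    Real.exp (-(4 * (mk.2 : ℝ) * (mk.2 + 2 * n + 2 * mk.1 + 1) + 8 * n * mk.1) * t) *
    Real.cos r ^ (2 * mk.1) * J mk.1 0 0 (Real.cos (2 * φ)) *
    J mk.2 (2 * n - 1) (2 * mk.1 + 1) (Real.cos (2 * r))

/-- The subelliptic heat kernel of the fibration `CP^1 → CP^{2n+1} → HP^n`. -/
def hKernel (n : ℕ) (J : ℕ → ℕ → ℕ → ℝ → ℝ) (t r φ : ℝ) : ℝ :=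
  ∑' mk : ℕ × ℕ, hTerm n J t r φ mk

end

/-!
Completing the square gives `-4(k(k+2n+m+1) + nm) = 4n² + 4n - (m+2k+2n+1)² + (m+1)²`. Hence, once
`e^{(m+1)²t}` is written as a Gaussian integral in `y`, the terms with `m + 2k = j` add up to the
`(2n+1)`-st derivative of the Chebyshev polynomial `T_{j+2n+1}` at `cos r cosh y`. The kernel is
therefore a Gaussian integral of the `(2n+1)`-st derivative of the theta series `∑ e^{-N²t} T_N(w)`,
which the Jacobi transformation turns into `√(π/t) e^{-ζ²/4t}` at `w = cos ζ`, up to a factor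
tending to `1`.

Write the derivative as a Cauchy integral over the circle of radius `t` around `cos r cosh y` and
put `y = √t s`. The exponent `(r² - y² - ζ²)/4t` then converges to
`-(1 - r cot r) s²/4 + (r / (2 sin r)) e^{iφ}`. It is dominated because the action `y² + Re ζ²`
exceeds `r²` by a multiple of `min (y², |y|)` up to `O(t)`, which rests on `r²/2 < -log (cos r)`.
The limiting integral is a Gaussian second moment, the source of the power `3/2`, times the
`(2n+1)`-st Fourier coefficient of `exp ((r / (2 sin r)) e^{iφ})`.
-/

/-! ### Jacobi polynomials -/

section Jacobi

open Polynomial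

lemma iteratedDeriv_polynomial_eval {𝕜 : Type*} [NontriviallyNormedField 𝕜] (P : 𝕜[X]) (k : ℕ)
    (x : 𝕜) : iteratedDeriv k (fun y ↦ P.eval y) x = (derivative^[k] P).eval x := by
  induction k generalizing P with
  | zero => simp
  | succ k ih =>
    have deriv_eval : deriv (fun y ↦ P.eval y) = fun y ↦ (derivative P).eval y :=
      funext fun _ ↦ P.deriv
    rw [iteratedDeriv_succ', deriv_eval, ih, Function.iterate_succ_apply]

lemma iteratedDeriv_one_sub_pow_mul_one_add_pow (α β k : ℕ) (x : ℝ) :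
    iteratedDeriv k (fun y : ℝ ↦ (1 - y) ^ (α + k) * (1 + y) ^ (β + k)) x =
      (-1) ^ k * k.factorial * ((1 - x) ^ α * (1 + x) ^ β) *
        ∑ i ∈ Finset.range (k + 1), ((α + k).choose (k - i) : ℝ) * (β + k).choose i *
          (x - 1) ^ i * (1 + x) ^ (k - i) := by
  have polynomial_form : (fun y : ℝ ↦ (1 - y) ^ (α + k) * (1 + y) ^ (β + k)) = fun y ↦
      (C ((-1 : ℝ) ^ (α + k)) * ((X - C 1) ^ (α + k) * (X + C 1) ^ (β + k)) : ℝ[X]).eval y := by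
    ext y
    simp only [eval_mul, eval_pow, eval_sub, eval_add, eval_X, eval_C]
    rw [← mul_assoc, ← mul_pow]
    ring
  rw [polynomial_form, iteratedDeriv_polynomial_eval, iterate_derivative_C_mul,
    iterate_derivative_mul, eval_mul, eval_C, eval_finsetSum, Finset.mul_sum, Finset.mul_sum]
  refine Finset.sum_congr rfl fun i hi ↦ ?_
  have hik : i ≤ k := Finset.mem_range_succ_iff.mp hi
  simp only [iterate_derivative_X_sub_pow, iterate_derivative_X_add_pow, nsmul_eq_mul, eval_mul,
    eval_natCast, eval_pow, eval_sub, eval_add, eval_X, eval_C,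
    Nat.descFactorial_eq_factorial_mul_choose, Nat.cast_mul]
  have neg_one_sub_pow : (x - 1) ^ α = (-1) ^ α * (1 - x) ^ α := by rw [← mul_pow]; ring
  have factorial_eq : (k.choose i : ℝ) * i.factorial * (k - i).factorial = k.factorial := by
    exact_mod_cast Nat.choose_mul_factorial_mul_factorial hik
  rw [show α + k - (k - i) = α + i by omega, show β + k - i = β + (k - i) by omega,
    pow_add (x - 1), pow_add (x + 1), neg_one_sub_pow, ← factorial_eq, add_comm x 1, pow_add]
  linear_combination (-1) ^ k * (k.choose i * i.factorial * (k - i).factorial : ℝ) *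
    ((1 - x) ^ α * (1 + x) ^ β) * ((α + k).choose (k - i) * (β + k).choose i *
      (x - 1) ^ i * (1 + x) ^ (k - i)) * pow_mul_pow_eq_one α (by norm_num : (-1 : ℝ) * -1 = 1)

lemma jacobiFormula_eq_sum_choose_mul_choose (α β k : ℕ) {x : ℝ} (hx : x ∈ Ioo (-1 : ℝ) 1) :
    jacobiFormula k α β x = ∑ i ∈ Finset.range (k + 1),
      ((α + k).choose (k - i) : ℝ) * (β + k).choose i *
        ((1 + x) / 2 - 1) ^ i * ((1 + x) / 2) ^ (k - i) := by
  have one_sub_ne : 1 - x ≠ 0 := (sub_pos.2 hx.2).ne'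
  have one_add_ne : 1 + x ≠ 0 := by linarith [hx.1]
  have halve_pow : ∀ i ∈ Finset.range (k + 1), ((α + k).choose (k - i) : ℝ) * (β + k).choose i *
      ((1 + x) / 2 - 1) ^ i * ((1 + x) / 2) ^ (k - i) = (2 ^ k)⁻¹ *
        (((α + k).choose (k - i) : ℝ) * (β + k).choose i * (x - 1) ^ i * (1 + x) ^ (k - i)) := by
    intro i hi
    have two_pow : (2 : ℝ) ^ k = 2 ^ i * 2 ^ (k - i) := by
      rw [← pow_add, Nat.add_sub_cancel' (Finset.mem_range_succ_iff.mp hi)]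
    rw [show (1 + x) / 2 - 1 = (x - 1) / 2 by ring, div_pow, div_pow, two_pow]
    ring
  rw [Finset.sum_congr rfl halve_pow, ← Finset.mul_sum, jacobiFormula,
    iteratedDeriv_one_sub_pow_mul_one_add_pow, zpow_neg, zpow_neg, zpow_natCast, zpow_natCast]
  field_simp
  rw [pow_right_comm, neg_one_sq, one_pow, one_mul]

/-- Expand `(c - 1) ^ i` and sum over `i` first by Vandermonde's identity. -/
lemma sum_choose_mul_choose_mul_sub_one_pow {R : Type*} [CommRing R] (α β k : ℕ) (c : R) :
    ∑ i ∈ Finset.range (k + 1), ((α + k).choose (k - i) : R) * (β + k).choose i *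
      (c - 1) ^ i * c ^ (k - i) =
    ∑ e ∈ Finset.range (k + 1), (-1) ^ e * c ^ (k - e) * ((β + k).choose e : R) *
      (α + β + 2 * k - e).choose (k - e) := by
  have expand : ∀ i ∈ Finset.range (k + 1), ((α + k).choose (k - i) : R) * (β + k).choose i *
      (c - 1) ^ i * c ^ (k - i) = ∑ e ∈ Finset.range (i + 1),
        ((α + k).choose (k - i) : R) * (β + k).choose i * i.choose e * (-1) ^ e * c ^ (k - e) := by
    intro i hi
    rw [sub_eq_neg_add, add_pow, Finset.mul_sum, Finset.sum_mul]
    refine Finset.sum_congr rfl fun e he ↦ ?_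
    rw [← Nat.sub_add_sub_cancel (Finset.mem_range_succ_iff.mp hi)
      (Finset.mem_range_succ_iff.mp he), pow_add]
    ring
  rw [Finset.sum_congr rfl expand,
    Finset.sum_comm' (t' := Finset.range (k + 1)) (s' := fun e ↦ Finset.Ico e (k + 1))
      fun i e ↦ by simp only [Finset.mem_range, Finset.mem_Ico]; omega]
  refine Finset.sum_congr rfl fun e he ↦ ?_
  have hek : e ≤ k := Finset.mem_range_succ_iff.mp he
  rw [show α + β + 2 * k - e = β + k - e + (α + k) by omega, Nat.add_choose_eq (β + k - e),
    Finset.Nat.sum_antidiagonal_eq_sum_range_succ_mk, Finset.sum_Ico_eq_sum_range,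
    show k + 1 - e = k - e + 1 by omega, Nat.cast_sum, Finset.mul_sum]
  refine Finset.sum_congr rfl fun j _ ↦ ?_
  have trinomial_revision : ((β + k).choose (e + j) : R) * (e + j).choose e =
      (β + k).choose e * (β + k - e).choose j := by
    have := Nat.choose_mul (n := β + k) (k := e + j) (s := e) (Nat.le_add_right e j)
    rw [Nat.add_sub_cancel_left] at this
    exact_mod_cast congrArg (Nat.cast : ℕ → R) this
  rw [← Nat.sub_sub, Nat.cast_mul]
  linear_combination
    ((α + k).choose (k - e - j) : R) * (-1) ^ e * c ^ (k - e) * trinomial_revision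

lemma jacobiFormula_eq_sum_pow (α β k : ℕ) {x : ℝ} (hx : x ∈ Ioo (-1 : ℝ) 1) :
    jacobiFormula k α β x = ∑ e ∈ Finset.range (k + 1),
      (-1 : ℝ) ^ e * ((1 + x) / 2) ^ (k - e) * (β + k).choose e *
        (α + β + 2 * k - e).choose (k - e) := by
  rw [jacobiFormula_eq_sum_choose_mul_choose α β k hx, sum_choose_mul_choose_mul_sub_one_pow]

end Jacobi

/-! ### Derivatives of Chebyshev polynomials -/

section Chebyshev

open Polynomial

lemma chebyshevU_eq_sum (R : Type*) [CommRing R] (j : ℕ) :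
    Chebyshev.U R j = ∑ s ∈ Finset.range (j + 1),
      (-1) ^ s * ((j - s).choose s : R[X]) * (2 * X) ^ (j - 2 * s) := by
  induction j using Nat.twoStepInduction with
  | zero => simp
  | one => simp [Finset.sum_range_succ]
  | more j ih₀ ih₁ =>
    have raise_exponent : 2 * X * Chebyshev.U R ((j + 1 : ℕ) : ℤ) = ∑ s ∈ Finset.range (j + 2),
        (-1) ^ s * ((j + 1 - s).choose s : R[X]) * (2 * X) ^ (j + 2 - 2 * s) := by
      rw [ih₁, Finset.mul_sum]
      refine Finset.sum_congr rfl fun s _ ↦ ?_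
      rcases le_or_gt (2 * s) (j + 1) with hs | hs
      · rw [show j + 2 - 2 * s = j + 1 - 2 * s + 1 by omega]
        ring
      · simp [Nat.choose_eq_zero_of_lt (show j + 1 - s < s by omega)]
    rw [show ((j + 2 : ℕ) : ℤ) = j + 2 by norm_cast, Chebyshev.U_add_two,
      show (j + 1 : ℤ) = (j + 1 : ℕ) by norm_cast, raise_exponent, ih₀,
      Finset.sum_range_succ _ (j + 2),
      Nat.choose_eq_zero_of_lt (show j + 2 - (j + 2) < j + 2 by omega),
      Finset.sum_range_succ' _ (j + 1), Finset.sum_range_succ' _ (j + 1), add_sub_right_comm,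
      ← Finset.sum_sub_distrib]
    simp only [Nat.cast_zero, mul_zero, zero_mul, add_zero, Nat.choose_zero_right]
    congr 1
    refine Finset.sum_congr rfl fun s hs ↦ ?_
    have hsj : s ≤ j := Finset.mem_range_succ_iff.mp hs
    rw [show j + 2 - (s + 1) = j - s + 1 by omega, show j + 1 - (s + 1) = j - s by omega,
      show j + 2 - 2 * (s + 1) = j - 2 * s by omega, Nat.choose_succ_succ]
    push_cast
    ring

/-- The Gegenbauer polynomial `C_j^{(q+1)}` multiplied by `q!`. -/
noncomputable def scaledGegenbauer (q j : ℕ) : ℝ[X] :=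
  ∑ s ∈ Finset.range (j / 2 + 1),
    C ((-1) ^ s * ((q + j - s).factorial / (s.factorial * (j - 2 * s).factorial) : ℝ)) *
      (2 * X) ^ (j - 2 * s)

lemma chebyshevU_eq_scaledGegenbauer (j : ℕ) : Chebyshev.U ℝ j = scaledGegenbauer 0 j := by
  have range_subset : Finset.range (j / 2 + 1) ⊆ Finset.range (j + 1) :=
    Finset.range_subset_range.2 (by omega)
  rw [chebyshevU_eq_sum, scaledGegenbauer, ← Finset.sum_subset range_subset]
  · refine Finset.sum_congr rfl fun s hs ↦ ?_
    have hsj : 2 * s ≤ j := by rw [Finset.mem_range] at hs; omega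
    rw [← C_eq_natCast, Nat.cast_choose ℝ (show s ≤ j - s by omega), Nat.sub_sub, ← two_mul,
      zero_add, C_mul, C_pow, C_neg, C_1]
  · intro s _ hs
    rw [Finset.mem_range] at hs
    rw [Nat.choose_eq_zero_of_lt (by omega)]
    simp

lemma derivative_scaledGegenbauer (q j : ℕ) :
    derivative (scaledGegenbauer q (j + 1)) = C 2 * scaledGegenbauer (q + 1) j := by
  have range_subset : Finset.range (j / 2 + 1) ⊆ Finset.range ((j + 1) / 2 + 1) :=
    Finset.range_subset_range.2 (by omega)
  rw [scaledGegenbauer, scaledGegenbauer, derivative_sum, Finset.mul_sum,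
    ← Finset.sum_subset range_subset]
  · refine Finset.sum_congr rfl fun s hs ↦ ?_
    have hsj : 2 * s ≤ j := by rw [Finset.mem_range] at hs; omega
    have coeff_eq : ((-1) ^ s * ((q + (j + 1) - s).factorial /
          (s.factorial * (j - 2 * s + 1).factorial)) : ℝ) * (j - 2 * s + 1 : ℕ) =
        (-1) ^ s * ((q + 1 + j - s).factorial / (s.factorial * (j - 2 * s).factorial)) := by
      rw [Nat.factorial_succ, show q + (j + 1) - s = q + 1 + j - s by omega]
      push_cast
      field_simp
    rw [show j + 1 - 2 * s = j - 2 * s + 1 by omega, ← coeff_eq, derivative_C_mul,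
      derivative_pow, ← C_ofNat, derivative_C_mul, derivative_X, Nat.add_sub_cancel]
    simp only [C_mul]
    ring
  · intro s hs hs'
    rw [Finset.mem_range] at hs hs'
    simp [show j + 1 - 2 * s = 0 by omega]

lemma iterate_derivative_chebyshevU (q j : ℕ) :
    derivative^[q] (Chebyshev.U ℝ (j + q : ℕ)) = C (2 ^ q) * scaledGegenbauer q j := by
  induction q generalizing j with
  | zero => simp [chebyshevU_eq_scaledGegenbauer]
  | succ q ih =>
    rw [Function.iterate_succ_apply', ← add_assoc, Nat.add_right_comm, ih, derivative_C_mul,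
      derivative_scaledGegenbauer, ← mul_assoc, ← C_mul, pow_succ]

lemma iterate_derivative_chebyshevT_eval (q j : ℕ) (x : ℝ) :
    (derivative^[q + 1] (Chebyshev.T ℝ (j + q + 1 : ℕ))).eval x =
      (j + q + 1) * 2 ^ q * ∑ s ∈ Finset.range (j / 2 + 1),
        (-1) ^ s * ((q + j - s).factorial / (s.factorial * (j - 2 * s).factorial)) *
          (2 * x) ^ (j - 2 * s) := by
  have index_sub_one : ((j + q + 1 : ℕ) : ℤ) - 1 = (j + q : ℕ) := by push_cast; ring
  have index_cast : (((j + q + 1 : ℕ) : ℤ) : ℝ[X]) = C ((j : ℝ) + q + 1) := by simp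
  rw [Function.iterate_succ_apply, Chebyshev.T_derivative_eq_U, index_sub_one, index_cast,
    iterate_derivative_C_mul, iterate_derivative_chebyshevU, scaledGegenbauer]
  simp only [eval_mul, eval_C, eval_finsetSum, eval_pow, eval_X, eval_ofNat, mul_assoc]

end Chebyshev

/-! ### Gaussian integrals -/

section Gaussian

variable {t : ℝ}

lemma mul_exp_mul_gaussian_eq_shift (ht : 0 < t) (a y : ℝ) :
    y * rexp (a * y) * rexp (-y ^ 2 / (4 * t)) =
      rexp (a ^ 2 * t) * ((y - 2 * t * a) * rexp (-(1 / (4 * t)) * (y - 2 * t * a) ^ 2) +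
        2 * t * a * rexp (-(1 / (4 * t)) * (y - 2 * t * a) ^ 2)) := by
  rw [← add_mul, mul_assoc, sub_add_cancel, mul_left_comm (rexp (a ^ 2 * t)), ← Real.exp_add,
    ← Real.exp_add]
  congr 2
  field_simp
  ring

lemma integrable_mul_exp_mul_gaussian (ht : 0 < t) (a : ℝ) :
    Integrable fun y : ℝ ↦ y * rexp (a * y) * rexp (-y ^ 2 / (4 * t)) := by
  have hb : 0 < 1 / (4 * t) := by positivity
  simp_rw [mul_exp_mul_gaussian_eq_shift ht]
  exact (((integrable_mul_exp_neg_mul_sq hb).comp_sub_right (2 * t * a)).add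
    (((integrable_exp_neg_mul_sq hb).comp_sub_right (2 * t * a)).const_mul _)).const_mul _

lemma integral_mul_gaussian_eq_zero (b : ℝ) : ∫ y : ℝ, y * rexp (-b * y ^ 2) = 0 := by
  have odd := integral_neg_eq_self (fun y : ℝ ↦ y * rexp (-b * y ^ 2)) volume
  simp only [neg_sq, neg_mul, integral_neg] at odd ⊢
  linarith

lemma integral_mul_exp_mul_gaussian (ht : 0 < t) (a : ℝ) :
    ∫ y : ℝ, y * rexp (a * y) * rexp (-y ^ 2 / (4 * t)) =
      2 * t * a * rexp (a ^ 2 * t) * √(4 * π * t) := by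
  have hb : 0 < 1 / (4 * t) := by positivity
  simp_rw [mul_exp_mul_gaussian_eq_shift ht]
  rw [integral_const_mul, integral_add
      ((integrable_mul_exp_neg_mul_sq hb).comp_sub_right (2 * t * a))
      (((integrable_exp_neg_mul_sq hb).comp_sub_right (2 * t * a)).const_mul _),
    integral_const_mul, integral_sub_right_eq_self fun y ↦ rexp (-(1 / (4 * t)) * y ^ 2),
    integral_sub_right_eq_self fun y ↦ y * rexp (-(1 / (4 * t)) * y ^ 2), integral_gaussian,
    integral_mul_gaussian_eq_zero, show π / (1 / (4 * t)) = 4 * π * t by field_simp]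
  ring

lemma two_mul_cosh_pow_eq_sum_exp (l : ℕ) (y : ℝ) :
    (2 * cosh y) ^ l = ∑ i ∈ Finset.range (l + 1), (l.choose i : ℝ) * rexp ((l - 2 * i) * y) := by
  rw [Real.cosh_eq, mul_div_cancel₀ _ two_ne_zero, add_comm (rexp y), add_pow]
  refine Finset.sum_congr rfl fun i hi ↦ ?_
  rw [← Real.exp_nat_mul, ← Real.exp_nat_mul, ← Real.exp_add, mul_comm,
    Nat.cast_sub (Finset.mem_range_succ_iff.mp hi)]
  ring_nf

/-- Obtained by differentiating `two_mul_cosh_pow_eq_sum_exp`. -/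
lemma sinh_mul_two_mul_cosh_pow_eq_sum_exp (l : ℕ) (y : ℝ) :
    sinh y * (2 * cosh y) ^ l = ∑ i ∈ Finset.range (l + 2),
      ((l + 1).choose i * (l + 1 - 2 * i) / (2 * (l + 1)) : ℝ) * rexp ((l + 1 - 2 * i) * y) := by
  have deriv_pow : HasDerivAt (fun y ↦ (2 * cosh y) ^ (l + 1))
      ((l + 1 : ℕ) * (2 * cosh y) ^ l * (2 * sinh y)) y := by
    simpa using ((Real.hasDerivAt_cosh y).const_mul 2).fun_pow (l + 1)
  have deriv_sum : HasDerivAt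
      (fun y ↦ ∑ i ∈ Finset.range (l + 2), ((l + 1).choose i : ℝ) * rexp ((l + 1 - 2 * i) * y))
      (∑ i ∈ Finset.range (l + 2),
        ((l + 1).choose i : ℝ) * (rexp ((l + 1 - 2 * i) * y) * (l + 1 - 2 * i))) y := by
    refine HasDerivAt.fun_sum fun i _ ↦ (HasDerivAt.exp ?_).const_mul _
    simpa using (hasDerivAt_id y).const_mul ((l : ℝ) + 1 - 2 * i)
  simp_rw [two_mul_cosh_pow_eq_sum_exp (l + 1), Nat.cast_succ] at deriv_pow
  have deriv_eq := deriv_pow.unique deriv_sum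
  calc sinh y * (2 * cosh y) ^ l
      = (l + 1) * (2 * cosh y) ^ l * (2 * sinh y) / (2 * (l + 1)) := by field_simp
    _ = _ := by
      rw [deriv_eq, Finset.sum_div]
      exact Finset.sum_congr rfl fun i _ ↦ by ring

lemma mul_sinh_mul_cosh_pow_mul_gaussian_eq_sum (l : ℕ) (t y : ℝ) :
    y * sinh y * (2 * cosh y) ^ l * rexp (-y ^ 2 / (4 * t)) = ∑ i ∈ Finset.range (l + 2),
      ((l + 1).choose i * (l + 1 - 2 * i) / (2 * (l + 1)) : ℝ) *
        (y * rexp ((l + 1 - 2 * i) * y) * rexp (-y ^ 2 / (4 * t))) := by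
  rw [mul_assoc y, sinh_mul_two_mul_cosh_pow_eq_sum_exp, Finset.mul_sum, Finset.sum_mul]
  exact Finset.sum_congr rfl fun i _ ↦ by ring

lemma integrable_mul_sinh_mul_cosh_pow_mul_gaussian (ht : 0 < t) (l : ℕ) :
    Integrable fun y : ℝ ↦ y * sinh y * (2 * cosh y) ^ l * rexp (-y ^ 2 / (4 * t)) := by
  simp_rw [mul_sinh_mul_cosh_pow_mul_gaussian_eq_sum]
  exact integrable_finsetSum _ fun i _ ↦ (integrable_mul_exp_mul_gaussian ht _).const_mul _

lemma integral_mul_sinh_mul_cosh_pow_mul_gaussian (ht : 0 < t) (l : ℕ) :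
    ∫ y : ℝ, y * sinh y * (2 * cosh y) ^ l * rexp (-y ^ 2 / (4 * t)) =
      t * √(4 * π * t) / (l + 1) * ∑ i ∈ Finset.range (l + 2), ((l + 1).choose i : ℝ) *
        ((l + 1 - 2 * i) ^ 2 * rexp ((l + 1 - 2 * i) ^ 2 * t)) := by
  simp_rw [mul_sinh_mul_cosh_pow_mul_gaussian_eq_sum]
  rw [integral_finsetSum _ fun i _ ↦ (integrable_mul_exp_mul_gaussian ht _).const_mul _,
    Finset.mul_sum]
  refine Finset.sum_congr rfl fun i _ ↦ ?_
  rw [integral_const_mul, integral_mul_exp_mul_gaussian ht]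
  field_simp

lemma integral_sq_mul_gaussian {b : ℝ} (hb : 0 < b) :
    ∫ s : ℝ, s ^ 2 * rexp (-b * s ^ 2) = √(π / b) / (2 * b) := by
  have hasDerivAt_primitive (s : ℝ) : HasDerivAt (fun s ↦ -1 / (2 * b) * rexp (-b * s ^ 2))
      (s * rexp (-b * s ^ 2)) s :=
    ((((hasDerivAt_pow 2 s).const_mul (-b)).exp).const_mul (-1 / (2 * b))).congr_deriv
      (by push_cast; field_simp)
  have integrable_sq : Integrable fun s : ℝ ↦ s ^ 2 * rexp (-b * s ^ 2) := by
    simpa using integrable_rpow_mul_exp_neg_mul_sq hb (s := 2) (by norm_num)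
  have by_parts := integral_mul_deriv_eq_deriv_mul_of_integrable (u := fun s : ℝ ↦ s)
    (u' := fun _ ↦ 1) (fun s _ ↦ hasDerivAt_id s) (fun s _ ↦ hasDerivAt_primitive s)
    (integrable_sq.congr <| .of_forall fun s ↦ by simp only [Pi.mul_apply]; ring)
    (((integrable_exp_neg_mul_sq hb).const_mul (-1 / (2 * b))).congr <| .of_forall fun s ↦ by
      simp only [Pi.mul_apply, one_mul])
    (((integrable_mul_exp_neg_mul_sq hb).const_mul (-1 / (2 * b))).congr <| .of_forall fun s ↦ by
      simp only [Pi.mul_apply]; ring)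
  simp_rw [one_mul, ← mul_assoc, ← sq] at by_parts
  rw [by_parts, integral_const_mul, integral_gaussian]
  ring

end Gaussian

lemma sum_range_succ_eq_two_nsmul_of_reflect {M : Type*} [AddCommMonoid M] {L : ℕ} {g : ℕ → M}
    (reflect : ∀ i ≤ L, g (L - i) = g i) (middle : ∀ i, 2 * i = L → g i = 0) :
    ∑ i ∈ Finset.range (L + 1), g i = 2 • ∑ i ∈ Finset.range ((L + 1) / 2), g i := by
  have upper_half : ∑ i ∈ Finset.Ico (L + 1 - (L + 1) / 2) (L + 1), g i =
      ∑ i ∈ Finset.range ((L + 1) / 2), g i := by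
    have := Finset.sum_Ico_reflect g 0 (show (L + 1) / 2 ≤ L + 1 by omega)
    rw [Nat.sub_zero, Nat.Ico_zero_eq_range] at this
    rw [← this]
    exact Finset.sum_congr rfl fun i hi ↦ reflect i (by rw [Finset.mem_range] at hi; omega)
  have middle_eq_zero : ∑ i ∈ Finset.Ico ((L + 1) / 2) (L + 1 - (L + 1) / 2), g i = 0 :=
    Finset.sum_eq_zero fun i hi ↦ middle i (by rw [Finset.mem_Ico] at hi; omega)
  rw [← Finset.sum_range_add_sum_Ico g (show (L + 1) / 2 ≤ L + 1 by omega),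
    ← Finset.sum_Ico_consecutive g (show (L + 1) / 2 ≤ L + 1 - (L + 1) / 2 by omega) (by omega),
    middle_eq_zero, zero_add, upper_half, two_nsmul]

/-! ### Partial sums of the kernel over a fixed total degree -/

section FiberSum

open Polynomial

lemma choose_mul_factorial_mul_choose_mul_choose (q m s i : ℕ) :
    ((s + i + m + 1 + q).choose q : ℝ) * q.factorial * (m + 1 + (s + i)).choose s *
        (q + (m + 1) + 2 * (s + i) - s).choose i =
      (q + 1 + m + 2 * (s + i) - s).factorial / (s.factorial * (m + 2 * i + 1).factorial) *
        (m + 2 * i + 1).choose i := by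
  rw [show s + i + m + 1 + q = q + (s + i + m + 1) by ring,
    show m + 1 + (s + i) = s + (m + 1 + i) by ring,
    show q + (m + 1) + 2 * (s + i) - s = i + (q + (s + i + m + 1)) by omega,
    show q + 1 + m + 2 * (s + i) - s = i + (q + (s + i + m + 1)) by omega,
    show m + 2 * i + 1 = i + (m + 1 + i) by ring, Nat.cast_add_choose, Nat.cast_add_choose,
    Nat.cast_add_choose, Nat.cast_add_choose, show s + (m + 1 + i) = s + i + m + 1 by ring]
  field_simp

lemma cos_two_mul_mem_Ioo {r : ℝ} (hr : r ∈ Ioo 0 (π / 2)) : cos (2 * r) ∈ Ioo (-1 : ℝ) 1 := by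
  have sin_pos : 0 < sin r := Real.sin_pos_of_pos_of_lt_pi hr.1 (by linarith [hr.2, pi_pos])
  have cos_pos : 0 < cos r := Real.cos_pos_of_mem_Ioo ⟨by linarith [hr.1, pi_pos], hr.2⟩
  have := Real.sin_sq_add_cos_sq r
  rw [Real.cos_two_mul]
  constructor <;> nlinarith

variable {n : ℕ} {J : ℕ → ℕ → ℕ → ℝ → ℝ} {r t : ℝ}

lemma pTerm_zero_eq_sum (hn : 1 ≤ n) (hJ : IsJacobi J) (hr : r ∈ Ioo 0 (π / 2)) (t : ℝ)
    (m k : ℕ) :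
    pTerm n J t r 0 (m, k) = rexp ((4 * n ^ 2 + 4 * n) * t) *
      rexp (-((m + 2 * k + 2 * n + 1 : ℕ) : ℝ) ^ 2 * t) / (2 * π ^ (2 * n + 2)) *
      (m + 2 * k + 2 * n + 1 : ℕ) * ∑ s ∈ Finset.range (k + 1),
        (-1 : ℝ) ^ s * cos r ^ (m + 2 * (k - s)) *
        ((2 * n + (m + 2 * k) - s).factorial / (s.factorial * (m + 2 * (k - s) + 1).factorial)) *
        ((m + 2 * (k - s) + 1).choose (k - s) * ((m + 1 : ℝ) ^ 2 * rexp ((m + 1) ^ 2 * t))) := by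
  obtain ⟨q, hq⟩ : ∃ q, 2 * n = q + 1 := ⟨2 * n - 1, by omega⟩
  have gamma_eq : Real.Gamma (2 * n) = q.factorial := by
    rw [← Real.Gamma_nat_eq_factorial]
    exact_mod_cast congrArg (fun a : ℕ ↦ Real.Gamma a) hq
  have half_angle : (1 + cos (2 * r)) / 2 = cos r ^ 2 := by rw [Real.cos_two_mul]; ring
  -- Completing the square in the eigenvalue separates the total degree `m + 2 * k` from `m`.
  have exp_eq : rexp (-(4 * ((k : ℝ) * (k + 2 * n + m + 1) + n * m)) * t) =
      rexp ((4 * n ^ 2 + 4 * n) * t) * rexp (-((m + 2 * k + 2 * n + 1 : ℕ) : ℝ) ^ 2 * t) *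
        rexp (((m : ℝ) + 1) ^ 2 * t) := by
    rw [← Real.exp_add, ← Real.exp_add]
    push_cast
    ring_nf
  have hx := cos_two_mul_mem_Ioo hr
  rw [pTerm, vertFactor, if_pos rfl, (hJ _ _ _).2 _ hx, jacobiFormula_eq_sum_pow _ _ _ hx,
    half_angle, gamma_eq, exp_eq, Finset.mul_sum, Finset.mul_sum]
  refine Finset.sum_congr rfl fun s hs ↦ ?_
  obtain ⟨i, rfl⟩ := Nat.exists_eq_add_of_le (Finset.mem_range_succ_iff.mp hs)
  have choose_eq := choose_mul_factorial_mul_choose_mul_choose q m s i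
  simp only [Nat.add_sub_cancel_left, show s + i + m + 2 * n = s + i + m + 1 + q by omega,
    show 2 * n - 1 = q by omega,
    show 2 * n + (m + 2 * (s + i)) - s = q + 1 + m + 2 * (s + i) - s by omega]
  rw [pow_add (cos r), pow_mul (cos r)]
  push_cast
  linear_combination rexp ((4 * n ^ 2 + 4 * n) * t) *
    rexp (-((m : ℝ) + 2 * (s + i) + 2 * n + 1) ^ 2 * t) * rexp (((m : ℝ) + 1) ^ 2 * t) /
    (2 * π ^ (2 * n + 2)) * (m + 2 * (s + i) + 2 * n + 1) * (m + 1) ^ 2 * (-1) ^ s *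
    cos r ^ m * (cos r ^ 2) ^ i * choose_eq

lemma sum_pTerm_zero_eq_sum_choose (hn : 1 ≤ n) (hJ : IsJacobi J) (hr : r ∈ Ioo 0 (π / 2))
    (t : ℝ) (j : ℕ) :
    ∑ k ∈ Finset.range (j / 2 + 1), pTerm n J t r 0 (j - 2 * k, k) =
      rexp ((4 * n ^ 2 + 4 * n) * t) * rexp (-((j + 2 * n + 1 : ℕ) : ℝ) ^ 2 * t) /
        (2 * π ^ (2 * n + 2)) * (j + 2 * n + 1 : ℕ) * ∑ s ∈ Finset.range (j / 2 + 1),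
          (-1 : ℝ) ^ s * cos r ^ (j - 2 * s) *
          ((2 * n + j - s).factorial / (s.factorial * (j - 2 * s + 1).factorial)) *
          ∑ i ∈ Finset.range ((j - 2 * s) / 2 + 1), ((j - 2 * s + 1).choose i : ℝ) *
            (((j - 2 * s : ℕ) + 1 - 2 * i : ℝ) ^ 2 *
              rexp (((j - 2 * s : ℕ) + 1 - 2 * i : ℝ) ^ 2 * t)) := by
  have reindex : ∀ k ∈ Finset.range (j / 2 + 1), pTerm n J t r 0 (j - 2 * k, k) =
      rexp ((4 * n ^ 2 + 4 * n) * t) * rexp (-((j + 2 * n + 1 : ℕ) : ℝ) ^ 2 * t) /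
        (2 * π ^ (2 * n + 2)) * (j + 2 * n + 1 : ℕ) * ∑ s ∈ Finset.range (k + 1),
          (-1 : ℝ) ^ s * cos r ^ (j - 2 * s) *
          ((2 * n + j - s).factorial / (s.factorial * (j - 2 * s + 1).factorial)) *
          (((j - 2 * s + 1).choose (k - s) : ℝ) *
            (((j - 2 * s : ℕ) + 1 - 2 * (k - s : ℕ) : ℝ) ^ 2 *
              rexp (((j - 2 * s : ℕ) + 1 - 2 * (k - s : ℕ) : ℝ) ^ 2 * t))) := by
    intro k hk
    have hkj : 2 * k ≤ j := by rw [Finset.mem_range] at hk; omega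
    rw [pTerm_zero_eq_sum hn hJ hr, Nat.sub_add_cancel hkj]
    congr 1
    refine Finset.sum_congr rfl fun s hs ↦ ?_
    have hsk : s ≤ k := Finset.mem_range_succ_iff.mp hs
    have degree_eq : j - 2 * k + 2 * (k - s) = j - 2 * s := by omega
    rw [degree_eq, ← degree_eq]
    push_cast
    ring_nf
  rw [Finset.sum_congr rfl reindex, ← Finset.mul_sum,
    Finset.sum_comm' (t' := Finset.range (j / 2 + 1)) (s' := fun s ↦ Finset.Ico s (j / 2 + 1))
      fun k s ↦ by simp only [Finset.mem_range, Finset.mem_Ico]; omega]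
  congr 1
  refine Finset.sum_congr rfl fun s hs ↦ ?_
  have hsj : s ≤ j / 2 := Finset.mem_range_succ_iff.mp hs
  rw [← Finset.mul_sum, Finset.sum_Ico_eq_sum_range,
    show j / 2 + 1 - s = (j - 2 * s) / 2 + 1 by omega]
  simp only [Nat.add_sub_cancel_left]

lemma sum_choose_mul_sq_mul_exp_eq_two_mul (l : ℕ) (t : ℝ) :
    ∑ i ∈ Finset.range (l + 2), ((l + 1).choose i : ℝ) *
        ((l + 1 - 2 * i) ^ 2 * rexp ((l + 1 - 2 * i) ^ 2 * t)) =
      2 * ∑ i ∈ Finset.range (l / 2 + 1), ((l + 1).choose i : ℝ) *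
        ((l + 1 - 2 * i) ^ 2 * rexp ((l + 1 - 2 * i) ^ 2 * t)) := by
  have halve := sum_range_succ_eq_two_nsmul_of_reflect (L := l + 1) (g := fun i ↦
    ((l + 1).choose i : ℝ) * ((l + 1 - 2 * i) ^ 2 * rexp ((l + 1 - 2 * i) ^ 2 * t)))
    (fun i hi ↦ by
      have reflect : (l + 1 - 2 * (l + 1 - i : ℕ) : ℝ) = -(l + 1 - 2 * i) := by
        push_cast [Nat.cast_sub hi]; ring
      rw [Nat.choose_symm hi, reflect, neg_sq])
    (fun i hi ↦ by
      have middle : (l + 1 - 2 * i : ℝ) = 0 := by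
        rw [sub_eq_zero]; exact_mod_cast hi.symm
      rw [middle]; simp)
  rwa [show (l + 1 + 1) / 2 = l / 2 + 1 by omega, nsmul_eq_mul, Nat.cast_ofNat] at halve

lemma integral_gaussian_mul_iterate_derivative_chebyshevT (ht : 0 < t) (p j : ℕ) (c : ℝ) :
    ∫ y : ℝ, y * sinh y * rexp (-y ^ 2 / (4 * t)) *
        (derivative^[p + 1] (Chebyshev.T ℝ (j + p + 1 : ℕ))).eval (c * cosh y) =
      2 * t * √(4 * π * t) * ((j + p + 1 : ℕ) * 2 ^ p) * ∑ s ∈ Finset.range (j / 2 + 1),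
        (-1 : ℝ) ^ s * c ^ (j - 2 * s) *
        ((p + j - s).factorial / (s.factorial * (j - 2 * s + 1).factorial)) *
        ∑ i ∈ Finset.range ((j - 2 * s) / 2 + 1), ((j - 2 * s + 1).choose i : ℝ) *
          (((j - 2 * s : ℕ) + 1 - 2 * i : ℝ) ^ 2 *
            rexp (((j - 2 * s : ℕ) + 1 - 2 * i : ℝ) ^ 2 * t)) := by
  have integrand_eq (y : ℝ) : y * sinh y * rexp (-y ^ 2 / (4 * t)) *
        (derivative^[p + 1] (Chebyshev.T ℝ (j + p + 1 : ℕ))).eval (c * cosh y) =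
      ∑ s ∈ Finset.range (j / 2 + 1), ((j + p + 1 : ℕ) * 2 ^ p * ((-1 : ℝ) ^ s * c ^ (j - 2 * s) *
        ((p + j - s).factorial / (s.factorial * (j - 2 * s).factorial)))) *
        (y * sinh y * (2 * cosh y) ^ (j - 2 * s) * rexp (-y ^ 2 / (4 * t))) := by
    rw [iterate_derivative_chebyshevT_eval, Finset.mul_sum, Finset.mul_sum]
    refine Finset.sum_congr rfl fun s _ ↦ ?_
    rw [mul_left_comm 2 c, mul_pow]
    push_cast
    ring
  simp_rw [integrand_eq]
  rw [integral_finsetSum _ fun s _ ↦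
    (integrable_mul_sinh_mul_cosh_pow_mul_gaussian ht _).const_mul _, Finset.mul_sum]
  refine Finset.sum_congr rfl fun s _ ↦ ?_
  rw [integral_const_mul, integral_mul_sinh_mul_cosh_pow_mul_gaussian ht,
    sum_choose_mul_sq_mul_exp_eq_two_mul, Nat.factorial_succ]
  push_cast
  field_simp

lemma sum_pTerm_zero_eq_integral (hn : 1 ≤ n) (hJ : IsJacobi J) (hr : r ∈ Ioo 0 (π / 2))
    (ht : 0 < t) (j : ℕ) :
    ∑ k ∈ Finset.range (j / 2 + 1), pTerm n J t r 0 (j - 2 * k, k) =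
      rexp ((4 * n ^ 2 + 4 * n) * t) / (2 * π ^ (2 * n + 2)) / 2 ^ (2 * n) / (2 * t) /
        √(4 * π * t) * (rexp (-((j + 2 * n + 1 : ℕ) : ℝ) ^ 2 * t) *
          ∫ y : ℝ, y * sinh y * rexp (-y ^ 2 / (4 * t)) *
            (derivative^[2 * n + 1] (Chebyshev.T ℝ (j + 2 * n + 1 : ℕ))).eval
              (cos r * cosh y)) := by
  rw [sum_pTerm_zero_eq_sum_choose hn hJ hr, integral_gaussian_mul_iterate_derivative_chebyshevT ht]
  field_simp

end FiberSum

/-! ### Elementary inequalities for `cos` and `cosh` -/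

lemma mul_tan_add_two_mul_log_cos_nonneg {a : ℝ} (ha : 0 ≤ a) (ha' : a < π / 2) :
    0 ≤ a * tan a + 2 * log (cos a) := by
  have cos_pos : ∀ x ∈ Icc 0 a, 0 < cos x := fun x hx ↦
    cos_pos_of_mem_Ioo ⟨by linarith [hx.1, pi_pos], by linarith [hx.2]⟩
  have hderiv : ∀ x ∈ Icc 0 a, HasDerivAt (fun x ↦ x * tan x + 2 * log (cos x))
      ((x - sin x * cos x) / cos x ^ 2) x := fun x hx ↦ by
    have hcos := (cos_pos x hx).ne'
    refine (((hasDerivAt_id x).mul (hasDerivAt_tan hcos)).add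
      (((hasDerivAt_cos x).log hcos).const_mul 2)).congr_deriv ?_
    rw [id, tan_eq_sin_div_cos]
    field_simp
    ring
  have hmono : MonotoneOn (fun x ↦ x * tan x + 2 * log (cos x)) (Icc 0 a) := by
    refine monotoneOn_of_hasDerivWithinAt_nonneg (convex_Icc 0 a)
      (fun x hx ↦ (hderiv x hx).continuousAt.continuousWithinAt)
      (fun x hx ↦ (hderiv x (interior_subset hx)).hasDerivWithinAt) fun x hx ↦ ?_
    obtain ⟨h0x, hxa⟩ := interior_subset hx
    have hsin : 0 ≤ sin x := sin_nonneg_of_nonneg_of_le_pi h0x (by linarith [pi_pos])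
    have hprod : sin x * cos x ≤ x :=
      (mul_le_of_le_one_right hsin (cos_le_one x)).trans (sin_le h0x)
    exact div_nonneg (sub_nonneg.2 hprod) (sq_nonneg _)
  simpa using hmono (left_mem_Icc.2 ha) (right_mem_Icc.2 ha) ha

lemma sq_mul_log_cos_le_of_pos {a r : ℝ} (ha : 0 < a) (har : a ≤ r) (hr : r < π / 2) :
    a ^ 2 * log (cos r) ≤ r ^ 2 * log (cos a) := by
  have cos_pos : ∀ x ∈ Icc a r, 0 < cos x := fun x hx ↦
    cos_pos_of_mem_Ioo ⟨by linarith [hx.1, pi_pos], by linarith [hx.2]⟩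
  have hderiv : ∀ x ∈ Icc a r, HasDerivAt (fun x ↦ log (cos x) / x ^ 2)
      (-(x * tan x + 2 * log (cos x)) / x ^ 3) x := fun x hx ↦ by
    have hx0 : x ≠ 0 := (ha.trans_le hx.1).ne'
    have hcos := (cos_pos x hx).ne'
    refine (((hasDerivAt_cos x).log hcos).fun_div (hasDerivAt_pow 2 x)
      (pow_ne_zero 2 hx0)).congr_deriv ?_
    rw [tan_eq_sin_div_cos]
    field_simp
    push_cast
    ring
  have hanti : AntitoneOn (fun x ↦ log (cos x) / x ^ 2) (Icc a r) := by
    refine antitoneOn_of_hasDerivWithinAt_nonpos (convex_Icc a r)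
      (fun x hx ↦ (hderiv x hx).continuousAt.continuousWithinAt)
      (fun x hx ↦ (hderiv x (interior_subset hx)).hasDerivWithinAt) fun x hx ↦ ?_
    obtain ⟨hax, hxr⟩ := interior_subset hx
    have hx0 : 0 ≤ x := ha.le.trans hax
    exact div_nonpos_of_nonpos_of_nonneg
      (neg_nonpos.2 (mul_tan_add_two_mul_log_cos_nonneg hx0 (hxr.trans_lt hr))) (pow_nonneg hx0 3)
  have hquot := hanti (left_mem_Icc.2 har) (right_mem_Icc.2 har) har
  rw [div_le_div_iff₀ (pow_pos (ha.trans_le har) 2) (pow_pos ha 2)] at hquot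
  linarith

lemma sq_mul_log_cos_le {a r : ℝ} (har : |a| ≤ r) (hr : r < π / 2) :
    a ^ 2 * log (cos r) ≤ r ^ 2 * log (cos a) := by
  rcases (abs_nonneg a).eq_or_lt with ha | ha
  · simp [abs_eq_zero.1 ha.symm]
  · simpa only [sq_abs, cos_abs] using sq_mul_log_cos_le_of_pos ha har hr

lemma sq_div_two_lt_neg_log_cos {r : ℝ} (hr : r ∈ Ioo 0 (π / 2)) :
    r ^ 2 / 2 < -log (cos r) := by
  have hderiv : ∀ x ∈ Icc 0 r, HasDerivAt (fun x ↦ log (cos x) + x ^ 2 / 2)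
      (x - tan x) x := fun x hx ↦ by
    have hcos : cos x ≠ 0 := (cos_pos_of_mem_Ioo
      ⟨by linarith [hx.1, pi_pos], hx.2.trans_lt hr.2⟩).ne'
    refine (((hasDerivAt_cos x).log hcos).fun_add
      ((hasDerivAt_pow 2 x).div_const 2)).congr_deriv ?_
    rw [tan_eq_sin_div_cos]
    push_cast
    ring
  have hanti : StrictAntiOn (fun x ↦ log (cos x) + x ^ 2 / 2) (Icc 0 r) := by
    refine strictAntiOn_of_hasDerivWithinAt_neg (convex_Icc 0 r)
      (fun x hx ↦ (hderiv x hx).continuousAt.continuousWithinAt)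
      (fun x hx ↦ (hderiv x (interior_subset hx)).hasDerivWithinAt) fun x hx ↦ ?_
    rw [interior_Icc] at hx
    exact sub_neg.2 (lt_tan hx.1 (hx.2.trans hr.2))
  have hlt := hanti (left_mem_Icc.2 hr.1.le) (right_mem_Icc.2 hr.1.le) hr.1
  simp only [cos_zero, log_one] at hlt
  linarith

lemma sinh_le_mul_cosh {x : ℝ} (hx : 0 ≤ x) : sinh x ≤ x * cosh x := by
  have hderiv : ∀ x, HasDerivAt (fun x ↦ x * cosh x - sinh x) (x * sinh x) x := fun x ↦
    (((hasDerivAt_id x).mul (hasDerivAt_cosh x)).sub (hasDerivAt_sinh x)).congr_deriv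
      (by rw [id]; ring)
  have hmono : MonotoneOn (fun x ↦ x * cosh x - sinh x) (Ici 0) :=
    monotoneOn_of_hasDerivWithinAt_nonneg (convex_Ici 0)
      (fun x _ ↦ (hderiv x).continuousAt.continuousWithinAt)
      (fun x _ ↦ (hderiv x).hasDerivWithinAt)
      fun x hx ↦ mul_nonneg (interior_subset hx) (sinh_nonneg_iff.2 (interior_subset hx))
  simpa using hmono self_mem_Ici hx hx

lemma two_mul_log_cosh_sub_le {b y : ℝ} (hby : |b| ≤ |y|) :
    2 * (log (cosh y) - log (cosh b)) ≤ y ^ 2 - b ^ 2 := by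
  have hderiv : ∀ x, HasDerivAt (fun x ↦ x ^ 2 - 2 * log (cosh x))
      (2 * (x * cosh x - sinh x) / cosh x) x := fun x ↦ by
    have hcosh := (cosh_pos x).ne'
    refine ((hasDerivAt_pow 2 x).fun_sub
      (((hasDerivAt_cosh x).log hcosh).const_mul 2)).congr_deriv ?_
    field_simp
    push_cast
    ring
  have hmono : MonotoneOn (fun x ↦ x ^ 2 - 2 * log (cosh x)) (Ici 0) :=
    monotoneOn_of_hasDerivWithinAt_nonneg (convex_Ici 0)
      (fun x _ ↦ (hderiv x).continuousAt.continuousWithinAt)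
      (fun x _ ↦ (hderiv x).hasDerivWithinAt)
      fun x hx ↦ div_nonneg (mul_nonneg zero_le_two
        (sub_nonneg.2 (sinh_le_mul_cosh (interior_subset hx)))) (cosh_pos x).le
  have hle := hmono (abs_nonneg b) (abs_nonneg y) hby
  simp only [sq_abs, cosh_abs] at hle
  linarith

lemma log_cosh_sub_log_cosh_le {b y : ℝ} (hby : b ≤ y) :
    log (cosh y) - log (cosh b) ≤ y - b := by
  have hcosh : cosh y ≤ rexp (y - b) * cosh b := by
    have hexp : rexp (-y) ≤ rexp (y - b + -b) := exp_le_exp.2 (by linarith)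
    rw [cosh_eq, cosh_eq, mul_div_assoc', mul_add, ← exp_add, ← exp_add, sub_add_cancel]
    linarith
  have hlog := log_le_log (cosh_pos y) hcosh
  rw [log_mul (exp_pos _).ne' (cosh_pos b).ne', log_exp] at hlog
  linarith

lemma one_add_sq_div_two_le_cosh (b : ℝ) : 1 + b ^ 2 / 2 ≤ cosh b := by
  have hdouble : cosh b = 1 + 2 * sinh (b / 2) ^ 2 := by
    have hcosh := cosh_two_mul (b / 2)
    rw [cosh_sq, mul_div_cancel₀ b two_ne_zero] at hcosh
    linarith
  have hsinh : (b / 2) ^ 2 ≤ sinh (b / 2) ^ 2 := by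
    rw [sq_le_sq, abs_sinh]
    exact self_le_sinh_iff.2 (abs_nonneg _)
  linarith

lemma log_le_log_add_div {x t z : ℝ} (hx : 0 < x) (hz : 0 < z) (h : z ≤ x + t) :
    log z ≤ log x + t / x := by
  have hlog := log_le_sub_one_of_pos (div_pos hz hx)
  rw [log_div hz.ne' hx.ne'] at hlog
  have hquot : z / x ≤ 1 + t / x := by
    rw [← div_self hx.ne', ← add_div]
    gcongr
  linarith

lemma log_le_log_cosh_add_log_add_div {c t y z : ℝ} (hc : 0 < c) (ht : 0 ≤ t) (hz : 0 < z)
    (h : z ≤ c * cosh y + t) : log z ≤ log (cosh y) + log c + t / c := by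
  have hlog := log_le_log_add_div (mul_pos hc (cosh_pos y)) hz h
  rw [log_mul hc.ne' (cosh_pos y).ne'] at hlog
  have hquot : t / (c * cosh y) ≤ t / c :=
    div_le_div_of_nonneg_left ht hc (le_mul_of_one_le_right hc.le (one_le_cosh y))
  linarith

/-! ### The complex cosine near the ray `cos r * cosh y` -/

lemma norm_cos_add_mul_I_sub {ε : ℝ} (hε : ε ^ 2 = 1) (a b : ℝ) :
    ‖Complex.cos (a + b * Complex.I) - ε‖ = cosh b - ε * cos a := by
  have hnonneg : 0 ≤ cosh b - ε * cos a := by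
    rcases eq_or_eq_neg_of_sq_eq_sq ε 1 (by rw [hε, one_pow]) with rfl | rfl <;>
      linarith [one_le_cosh b, cos_le_one a, neg_one_le_cos a]
  have hcos : Complex.cos (a + b * Complex.I) - ε =
      ((cos a * cosh b - ε : ℝ) : ℂ) + ((-(sin a * sinh b) : ℝ) : ℂ) * Complex.I := by
    rw [Complex.cos_add_mul_I]
    push_cast
    ring
  rw [hcos, Complex.norm_add_mul_I, sqrt_eq_iff_eq_sq (by positivity) hnonneg]
  linear_combination
    sinh b ^ 2 * sin_sq_add_cos_sq a + (cos a ^ 2 - 1) * cosh_sq b + (1 - cos a ^ 2) * hε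

lemma abs_cosh_sub_mul_cos_sub_abs_sub_le {ε a b x t : ℝ} (hε : ε ^ 2 = 1)
    (h : ‖Complex.cos (a + b * Complex.I) - x‖ ≤ t) :
    |cosh b - ε * cos a - (|x - ε|)| ≤ t := by
  have hnorm := abs_norm_sub_norm_le (Complex.cos (a + b * Complex.I) - ε) ((x - ε : ℝ) : ℂ)
  rw [norm_cos_add_mul_I_sub hε, Complex.norm_real, norm_eq_abs, Complex.ofReal_sub,
    sub_sub_sub_cancel_right] at hnorm
  exact hnorm.trans h

lemma cosh_le_max_add_of_norm_cos_sub_le {a b x t : ℝ} (hx : -1 ≤ x)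
    (h : ‖Complex.cos (a + b * Complex.I) - x‖ ≤ t) : cosh b ≤ max x 1 + t := by
  have dist_one := abs_le.1 (abs_cosh_sub_mul_cos_sub_abs_sub_le (one_pow 2) h)
  have dist_neg_one := abs_le.1 (abs_cosh_sub_mul_cos_sub_abs_sub_le (ε := -1) (by norm_num) h)
  rw [abs_of_nonneg (by linarith : (0 : ℝ) ≤ x - -1)] at dist_neg_one
  linarith [max_sub_min_eq_abs' x 1, max_add_min x 1]

lemma cos_le_add_of_norm_cos_sub_le {a b x t : ℝ} (hx : -1 ≤ x)
    (h : ‖Complex.cos (a + b * Complex.I) - x‖ ≤ t) : cos a ≤ x + t := by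
  have dist_one := abs_le.1 (abs_cosh_sub_mul_cos_sub_abs_sub_le (one_pow 2) h)
  have dist_neg_one := abs_le.1 (abs_cosh_sub_mul_cos_sub_abs_sub_le (ε := -1) (by norm_num) h)
  rw [abs_of_nonneg (by linarith : (0 : ℝ) ≤ x - -1)] at dist_neg_one
  linarith [neg_abs_le (x - 1)]

lemma sq_mul_le_sq_mul_neg_log_cos {r a y t : ℝ} (hr : r ∈ Ioo 0 (π / 2)) (ht : 0 ≤ t)
    (ha : cos a ≤ cos r * cosh y + t) :
    r ^ 2 * (-log (cos r) - y ^ 2 / 2 - t / cos r) ≤ a ^ 2 * -log (cos r) := by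
  have hcos : 0 < cos r := cos_pos_of_mem_Ioo ⟨by linarith [hr.1, pi_pos], hr.2⟩
  rcases le_total r |a| with har | har
  · have hsq : r ^ 2 ≤ a ^ 2 := sq_le_sq.2 (by rwa [abs_of_pos hr.1])
    have hquot : 0 ≤ t / cos r := by positivity
    have hlog : 0 ≤ -log (cos r) := neg_nonneg.2 (log_nonpos hcos.le (cos_le_one r))
    calc r ^ 2 * (-log (cos r) - y ^ 2 / 2 - t / cos r)
        ≤ r ^ 2 * -log (cos r) :=
          mul_le_mul_of_nonneg_left (by linarith [sq_nonneg y]) (sq_nonneg r)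
      _ ≤ a ^ 2 * -log (cos r) := mul_le_mul_of_nonneg_right hsq hlog
  · have hcosa : 0 < cos a :=
      cos_pos_of_mem_Ioo ⟨by linarith [neg_abs_le a, hr.2], by linarith [le_abs_self a, hr.2]⟩
    have hlog := log_le_log_cosh_add_log_add_div hcos ht hcosa ha
    have hlogcosh : log (cosh y) ≤ y ^ 2 / 2 :=
      (log_le_iff_le_exp (cosh_pos y)).2 (cosh_le_exp_half_sq y)
    have hchord := sq_mul_log_cos_le har hr.2
    have hmul : r ^ 2 * log (cos a) ≤ r ^ 2 * (y ^ 2 / 2 + log (cos r) + t / cos r) :=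
      mul_le_mul_of_nonneg_left (by linarith) (sq_nonneg r)
    linarith

lemma abs_le_abs_of_cosh_le_mul_cosh_add {c t b y : ℝ} (hc : 0 < c) (ht : 0 ≤ t)
    (htc : t / c ≤ -log c) (hb : cosh b ≤ c * cosh y + t) : |b| ≤ |y| := by
  have hlog := log_le_log_cosh_add_log_add_div hc ht (cosh_pos b) hb
  rw [← cosh_le_cosh, ← log_le_log_iff (cosh_pos b) (cosh_pos y)]
  linarith

lemma two_mul_neg_log_sub_div_le_sq_sub_sq {c t b y : ℝ} (hc : 0 < c) (ht : 0 ≤ t)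
    (htc : t / c ≤ -log c) (hb : cosh b ≤ c * cosh y + t) :
    2 * (-log c - t / c) ≤ y ^ 2 - b ^ 2 := by
  have hlog := log_le_log_cosh_add_log_add_div hc ht (cosh_pos b) hb
  linarith [two_mul_log_cosh_sub_le (abs_le_abs_of_cosh_le_mul_cosh_add hc ht htc hb)]

lemma neg_log_div_two_mul_abs_le_sq_sub_sq {c t b y : ℝ} (hc : 0 < c) (ht : 0 ≤ t)
    (htc : t / c ≤ -log c / 2) (hb : cosh b ≤ c * cosh y + t) :
    -log c / 2 * |y| ≤ y ^ 2 - b ^ 2 := by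
  have hnonneg : 0 ≤ -log c / 2 := (div_nonneg ht hc.le).trans htc
  have hlog := log_le_log_cosh_add_log_add_div hc ht (cosh_pos b) hb
  have hlin := log_cosh_sub_log_cosh_le
    (abs_le_abs_of_cosh_le_mul_cosh_add hc ht (by linarith) hb)
  rw [cosh_abs, cosh_abs] at hlin
  have hdiff : -log c / 2 ≤ |y| - |b| := by linarith
  calc -log c / 2 * |y| ≤ (|y| - |b|) * |y| := by gcongr
    _ ≤ (|y| - |b|) * (|y| + |b|) := by
        gcongr
        · exact hnonneg.trans hdiff
        · exact le_add_of_nonneg_right (abs_nonneg b)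
    _ = y ^ 2 - b ^ 2 := by rw [← sq_abs y, ← sq_abs b]; ring

section ActionGap

variable {r t y a b : ℝ}

lemma sq_add_mul_sq_sub_le_of_mul_cosh_le_one (hr : r ∈ Ioo 0 (π / 2)) (ht : 0 ≤ t)
    (hone : cos r * cosh y ≤ 1)
    (hw : ‖Complex.cos (a + b * Complex.I) - (cos r * cosh y : ℝ)‖ ≤ t) :
    r ^ 2 + (1 - r ^ 2 / (2 * -log (cos r))) * y ^ 2
      - (r ^ 2 / (-log (cos r) * cos r) + 2) * t ≤ a ^ 2 - b ^ 2 + y ^ 2 := by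
  have hcos : 0 < cos r := cos_pos_of_mem_Ioo ⟨by linarith [hr.1, pi_pos], hr.2⟩
  have hx : -1 ≤ cos r * cosh y := by linarith [mul_pos hcos (cosh_pos y)]
  have hL : 0 < -log (cos r) := by linarith [sq_div_two_lt_neg_log_cos hr, sq_nonneg r]
  have hb : b ^ 2 ≤ 2 * t := by
    have hcosh := cosh_le_max_add_of_norm_cos_sub_le hx hw
    rw [max_eq_right hone] at hcosh
    linarith [one_add_sq_div_two_le_cosh b]
  have ha := sq_mul_le_sq_mul_neg_log_cos hr ht (cos_le_add_of_norm_cos_sub_le hx hw)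
  rw [← div_le_iff₀ hL] at ha
  have hexpand : r ^ 2 * (-log (cos r) - y ^ 2 / 2 - t / cos r) / -log (cos r) =
      r ^ 2 - r ^ 2 / (2 * -log (cos r)) * y ^ 2 - r ^ 2 / (-log (cos r) * cos r) * t := by
    generalize -log (cos r) = L at hL
    field_simp
  linarith

lemma sq_add_mul_abs_sub_le_of_one_le_mul_cosh (hr : r ∈ Ioo 0 (π / 2)) (ht : 0 ≤ t)
    (htc : t / cos r ≤ -log (cos r) / 2) (hone : 1 ≤ cos r * cosh y)
    (hw : ‖Complex.cos (a + b * Complex.I) - (cos r * cosh y : ℝ)‖ ≤ t) :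
    r ^ 2 + (2 * -log (cos r) - r ^ 2) / 8 * |y| - 2 / cos r * t ≤ a ^ 2 - b ^ 2 + y ^ 2 := by
  have hcos : 0 < cos r := cos_pos_of_mem_Ioo ⟨by linarith [hr.1, pi_pos], hr.2⟩
  have hcosh := cosh_le_max_add_of_norm_cos_sub_le (by linarith) hw
  rw [max_eq_left hone] at hcosh
  have hgap := sq_div_two_lt_neg_log_cos hr
  have hquot : 0 ≤ t / cos r := div_nonneg ht hcos.le
  have hconst := two_mul_neg_log_sub_div_le_sq_sub_sq hcos ht (by linarith) hcosh
  have hlin := neg_log_div_two_mul_abs_le_sq_sub_sq hcos ht htc hcosh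
  generalize -log (cos r) = L at *
  have hL : 0 < L := by linarith [sq_nonneg r]
  -- The weights `1 - θ` and `θ` turn the constant `2 * L` into `r ^ 2` plus a linear gain.
  obtain ⟨θ, hθ⟩ : ∃ θ, θ * (4 * L) = 2 * L - r ^ 2 := ⟨(2 * L - r ^ 2) / (4 * L), by field_simp⟩
  have hθ0 : 0 ≤ θ := nonneg_of_mul_nonneg_left (by linarith) (by linarith : 0 < 4 * L)
  have hθ1 : 0 ≤ 1 - θ := by nlinarith [sq_nonneg r]
  have hmix := add_le_add (mul_le_mul_of_nonneg_left hconst hθ1)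
    (mul_le_mul_of_nonneg_left hlin hθ0)
  have hslope : θ * (L / 2 * |y|) = (2 * L - r ^ 2) / 8 * |y| := by rw [← hθ]; ring
  have hrest : (1 - θ) * (2 * (L - t / cos r)) =
      2 * L - (2 * L - r ^ 2) / 2 - 2 / cos r * t + 2 * (θ * (t / cos r)) := by
    rw [← hθ]; ring
  linarith [mul_nonneg hθ0 hquot, sq_nonneg a]

lemma exists_sq_add_mul_min_sub_le (hr : r ∈ Ioo 0 (π / 2)) :
    ∃ κ M : ℝ, 0 < κ ∧ ∀ᶠ t in 𝓝[>] 0, ∀ y a b : ℝ,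
      ‖Complex.cos (a + b * Complex.I) - (cos r * cosh y : ℝ)‖ ≤ t →
        r ^ 2 + κ * min (y ^ 2) |y| - M * t ≤ a ^ 2 - b ^ 2 + y ^ 2 := by
  have hcos : 0 < cos r := cos_pos_of_mem_Ioo ⟨by linarith [hr.1, pi_pos], hr.2⟩
  have hgap := sq_div_two_lt_neg_log_cos hr
  have hL : 0 < -log (cos r) := by linarith [sq_nonneg r]
  set κ₁ := 1 - r ^ 2 / (2 * -log (cos r)) with hκ₁_def
  set κ₂ := (2 * -log (cos r) - r ^ 2) / 8
  have hκ₁ : 0 < κ₁ := by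
    rw [hκ₁_def, sub_pos, div_lt_one (by linarith)]
    linarith
  have hκ₂ : 0 < κ₂ := div_pos (by linarith) (by norm_num)
  have hM₁ : 0 < r ^ 2 / (-log (cos r) * cos r) + 2 := by positivity
  have hM₂ : 0 < 2 / cos r := by positivity
  refine ⟨min κ₁ κ₂, r ^ 2 / (-log (cos r) * cos r) + 2 + 2 / cos r, lt_min hκ₁ hκ₂, ?_⟩
  have ht₀ : 0 < -log (cos r) / 2 * cos r := by positivity
  filter_upwards [Ioc_mem_nhdsGT ht₀] with t ht y a b hw
  obtain ⟨ht, htt⟩ : 0 ≤ t ∧ t ≤ -log (cos r) / 2 * cos r := ⟨ht.1.le, ht.2⟩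
  have hmin : 0 ≤ min (y ^ 2) |y| := le_min (sq_nonneg _) (abs_nonneg _)
  rw [add_mul]
  rcases le_total (cos r * cosh y) 1 with hone | hone
  · have hgain : r ^ 2 + κ₁ * y ^ 2 - (r ^ 2 / (-log (cos r) * cos r) + 2) * t ≤
        a ^ 2 - b ^ 2 + y ^ 2 := sq_add_mul_sq_sub_le_of_mul_cosh_le_one hr ht hone hw
    linarith [mul_nonneg hM₂.le ht,
      mul_le_mul (min_le_left κ₁ κ₂) (min_le_left (y ^ 2) |y|) hmin hκ₁.le]
  · have hgain : r ^ 2 + κ₂ * |y| - 2 / cos r * t ≤ a ^ 2 - b ^ 2 + y ^ 2 :=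
      sq_add_mul_abs_sub_le_of_one_le_mul_cosh hr ht ((div_le_iff₀ hcos).2 htt) hone hw
    linarith [mul_nonneg hM₁.le ht,
      mul_le_mul (min_le_right κ₁ κ₂) (min_le_right (y ^ 2) |y|) hmin hκ₂.le]

end ActionGap

/-! ### The theta series of Chebyshev polynomials -/

section Theta

open Polynomial

/-- The theta series `∑ e^{-N²t} T_N(w)` over `N : ℤ`: the heat kernel of the circle, written as a
function of `w = cos ζ` so that it can be differentiated in `w`. -/
noncomputable def chebyshevTheta (t : ℝ) (w : ℂ) : ℂ :=
  ∑' N : ℤ, Complex.exp (-(N : ℂ) ^ 2 * t) * (Chebyshev.T ℂ N).eval w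

/-- The factor by which the Poisson-dual expansion of `chebyshevTheta t (cos ζ)` differs from its
leading Gaussian; it tends to `1` as `t → 0`. -/
noncomputable def dualTheta (t : ℝ) (ζ : ℂ) : ℂ :=
  jacobiTheta₂ (-Complex.I * ζ / (2 * t)) (Complex.I * π / t)

lemma sqrt_mul_exp_mul_dualTheta {t : ℝ} (ht : 0 < t) (ζ : ℂ) :
    ((√(π / t) : ℝ) : ℂ) * Complex.exp (-ζ ^ 2 / (4 * t)) * dualTheta t ζ =
      jacobiTheta₂ (ζ / (2 * π)) (Complex.I * t / π) := by
  have hpi : (π : ℂ) ≠ 0 := by exact_mod_cast pi_ne_zero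
  have htc : (t : ℂ) ≠ 0 := by exact_mod_cast ht.ne'
  have hscale : 1 / (-Complex.I * (Complex.I * t / π)) ^ (1 / 2 : ℂ) = ((√(π / t) : ℝ) : ℂ) := by
    have harg : -Complex.I * (Complex.I * t / π) = ((t / π : ℝ) : ℂ) := by
      push_cast
      linear_combination (-(t / π : ℂ)) * Complex.I_sq
    have hhalf : (1 / 2 : ℂ) = ((1 / 2 : ℝ) : ℂ) := by norm_num
    rw [harg, hhalf, ← Complex.ofReal_cpow (by positivity), ← sqrt_eq_rpow, ← inv_div t π,
      sqrt_inv, one_div, Complex.ofReal_inv]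
  have hgauss : -π * Complex.I * (ζ / (2 * π)) ^ 2 / (Complex.I * t / π) = -ζ ^ 2 / (4 * t) := by
    field_simp
    norm_num
  have hz : ζ / (2 * π) / (Complex.I * t / π) = -Complex.I * ζ / (2 * t) := by
    field_simp
    linear_combination ζ * Complex.I_sq
  have hτ : -1 / (Complex.I * t / π) = Complex.I * π / t := by
    field_simp
    linear_combination -Complex.I_sq
  rw [jacobiTheta₂_functional_equation, hscale, hgauss, hz, hτ, dualTheta]

lemma hasSum_exp_mul_chebyshevT_cos {t : ℝ} (ht : 0 < t) (ζ : ℂ) :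
    HasSum (fun N : ℤ ↦ Complex.exp (-(N : ℂ) ^ 2 * t) * (Chebyshev.T ℂ N).eval (Complex.cos ζ))
      (((√(π / t) : ℝ) : ℂ) * Complex.exp (-ζ ^ 2 / (4 * t)) * dualTheta t ζ) := by
  have hpi : (π : ℂ) ≠ 0 := by exact_mod_cast pi_ne_zero
  have him : 0 < (Complex.I * t / π : ℂ).im := by
    rw [Complex.div_ofReal_im, Complex.I_mul_im, Complex.ofReal_re]
    positivity
  have hneg := hasSum_jacobiTheta₂_term (-(ζ / (2 * π))) him
  rw [jacobiTheta₂_neg_left] at hneg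
  rw [sqrt_mul_exp_mul_dualTheta ht, ← add_self_div_two (jacobiTheta₂ _ _)]
  refine (((hasSum_jacobiTheta₂_term _ him).add hneg).div_const 2).congr_fun fun N ↦ ?_
  simp only [jacobiTheta₂_term]
  rw [Chebyshev.T_complex_cos, Complex.cos, mul_div_assoc', mul_add, ← Complex.exp_add,
    ← Complex.exp_add]
  congr 3 <;>
  · field_simp
    linear_combination (-(N : ℂ) ^ 2 * t) * Complex.I_sq

lemma hasSum_chebyshevTheta {t : ℝ} (ht : 0 < t) (w : ℂ) :
    HasSum (fun N : ℤ ↦ Complex.exp (-(N : ℂ) ^ 2 * t) * (Chebyshev.T ℂ N).eval w)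
      (chebyshevTheta t w) := by
  obtain ⟨ζ, rfl⟩ := Complex.cos_surjective w
  exact (hasSum_exp_mul_chebyshevT_cos ht ζ).summable.hasSum

lemma chebyshevTheta_cos {t : ℝ} (ht : 0 < t) (ζ : ℂ) :
    chebyshevTheta t (Complex.cos ζ) =
      ((√(π / t) : ℝ) : ℂ) * Complex.exp (-ζ ^ 2 / (4 * t)) * dualTheta t ζ :=
  (hasSum_exp_mul_chebyshevT_cos ht ζ).tsum_eq

lemma summable_exp_neg_mul_abs_int {η : ℝ} (hη : 0 < η) :
    Summable fun n : ℤ ↦ rexp (-(η * |(n : ℝ)|)) := by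
  have hnat : Summable fun n : ℕ ↦ rexp (-(η * n)) :=
    (summable_exp_nat_mul_iff.2 (neg_lt_zero.2 hη)).congr fun n ↦ by ring_nf
  exact Summable.of_nat_of_neg (by simpa using hnat) (by simpa using hnat)

lemma norm_jacobiTheta₂_term_le_of_four_mul_abs_im_le {z τ : ℂ} (hτ : 2 ≤ τ.im)
    (hz : 4 * |z.im| ≤ τ.im) {n : ℤ} (hn : n ≠ 0) :
    ‖jacobiTheta₂_term n z τ‖ ≤ rexp (-(1 * |(n : ℝ)|)) * rexp (-(τ.im / 2)) := by
  refine (norm_jacobiTheta₂_term_le (S := τ.im / 4) (by linarith) (by linarith) le_rfl n).trans ?_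
  rw [← exp_add, exp_le_exp, Int.cast_abs]
  have habs : (1 : ℝ) ≤ |(n : ℝ)| := by exact_mod_cast Int.one_le_abs hn
  have hprod : 2 * |(n : ℝ)| ≤ τ.im * |(n : ℝ)| := by gcongr
  have hprod' : τ.im * 1 ≤ τ.im * |(n : ℝ)| := by gcongr
  have hsq : τ.im * |(n : ℝ)| ≤ τ.im * (n : ℝ) ^ 2 := by
    rw [← sq_abs]
    gcongr
    exact le_self_pow₀ habs two_ne_zero
  have hpi : 3 * (τ.im * (n : ℝ) ^ 2 - 2 * (τ.im / 4) * |(n : ℝ)|) ≤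
      π * (τ.im * (n : ℝ) ^ 2 - 2 * (τ.im / 4) * |(n : ℝ)|) :=
    mul_le_mul_of_nonneg_right pi_gt_three.le (by linarith)
  linarith

lemma exists_norm_jacobiTheta₂_sub_one_le : ∃ C : ℝ, 0 < C ∧ ∀ z τ : ℂ, 2 ≤ τ.im →
    4 * |z.im| ≤ τ.im → ‖jacobiTheta₂ z τ - 1‖ ≤ C * rexp (-(τ.im / 2)) := by
  have hsum := summable_exp_neg_mul_abs_int one_pos
  refine ⟨_, hsum.tsum_pos (fun _ ↦ (exp_pos _).le) 0 (exp_pos _), fun z τ hτ hz ↦ ?_⟩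
  have hrest := hasSum_ite_sub_hasSum
    (hasSum_jacobiTheta₂_term z (by linarith : 0 < τ.im)) 0
  have hzero : jacobiTheta₂_term 0 z τ = 1 := by simp [jacobiTheta₂_term]
  rw [hzero] at hrest
  rw [← hrest.tsum_eq]
  refine tsum_of_norm_bounded (hsum.hasSum.mul_right _) fun n ↦ ?_
  split_ifs with hn
  · rw [norm_zero]
    positivity
  · exact norm_jacobiTheta₂_term_le_of_four_mul_abs_im_le hτ hz hn

lemma exists_norm_dualTheta_sub_one_le : ∃ C : ℝ, 0 < C ∧ ∀ t : ℝ, 0 < t → t ≤ 1 → ∀ ζ : ℂ,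
    |ζ.re| ≤ π / 2 → ‖dualTheta t ζ - 1‖ ≤ C * rexp (-(π / t / 2)) := by
  obtain ⟨C, hC, hbound⟩ := exists_norm_jacobiTheta₂_sub_one_le
  refine ⟨C, hC, fun t ht ht1 ζ hζ ↦ ?_⟩
  have hτ : (Complex.I * π / t : ℂ).im = π / t := by
    rw [Complex.div_ofReal_im, Complex.I_mul_im, Complex.ofReal_re]
  have hz : (-Complex.I * ζ / (2 * t)).im = -ζ.re / (2 * t) := by
    rw [← Complex.ofReal_ofNat, ← Complex.ofReal_mul, Complex.div_ofReal_im, neg_mul,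
      Complex.neg_im, Complex.I_mul_im]
  have hbound' := hbound (-Complex.I * ζ / (2 * t)) (Complex.I * π / t)
  rw [hτ, hz] at hbound'
  refine hbound' ?_ ?_
  · rw [le_div_iff₀ ht]
    linarith [pi_gt_three]
  · rw [abs_div, abs_neg, abs_of_pos (by positivity : 0 < 2 * t), le_div_iff₀ ht]
    field_simp
    linarith

lemma exists_cos_add_mul_I_eq {w : ℂ} (hw : 0 < w.re) :
    ∃ a b : ℝ, |a| ≤ π / 2 ∧ Complex.cos (a + b * Complex.I) = w := by
  obtain ⟨ζ, hζ⟩ := Complex.cos_surjective w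
  obtain ⟨a, b, ha, hcos⟩ : ∃ a b : ℝ, |a| ≤ π ∧ Complex.cos (a + b * Complex.I) = w := by
    refine ⟨toIocMod two_pi_pos (-π) ζ.re, ζ.im, ?_, ?_⟩
    · obtain ⟨hlt, hle⟩ := toIocMod_mem_Ioc two_pi_pos (-π) ζ.re
      exact abs_le.2 ⟨hlt.le, by linarith⟩
    · rw [← hζ, ← Complex.cos_sub_int_mul_two_pi ζ (toIocDiv two_pi_pos (-π) ζ.re), toIocMod]
      push_cast [zsmul_eq_mul]
      rw [sub_add_eq_add_sub, Complex.re_add_im]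
  refine ⟨a, b, ?_, hcos⟩
  have hre : w.re = cos a * cosh b := by
    rw [← hcos, Complex.cos_add_mul_I, Complex.sub_re]
    simp [← Complex.ofReal_cos, ← Complex.ofReal_cosh, ← Complex.ofReal_sin, ← Complex.ofReal_sinh]
  by_contra! hlt
  have hnonpos : cos |a| ≤ 0 := cos_nonpos_of_pi_div_two_le_of_le hlt.le (by linarith [pi_pos])
  rw [cos_abs] at hnonpos
  exact hw.not_ge (hre ▸ mul_nonpos_of_nonpos_of_nonneg hnonpos (cosh_pos b).le)

lemma norm_chebyshevT_eval_cos_le (N : ℤ) (ζ : ℂ) :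
    ‖(Chebyshev.T ℂ N).eval (Complex.cos ζ)‖ ≤ rexp (|(N : ℝ)| * |ζ.im|) := by
  have hexp : ∀ z : ℂ, |z.re| ≤ |(N : ℝ)| * |ζ.im| →
      ‖Complex.exp z‖ ≤ rexp (|(N : ℝ)| * |ζ.im|) := fun z hz ↦ by
    rw [Complex.norm_exp]
    exact exp_le_exp.2 ((le_abs_self _).trans hz)
  rw [Chebyshev.T_complex_cos, Complex.cos, norm_div, Complex.norm_ofNat, div_le_iff₀ two_pos,
    mul_two]
  exact norm_add_le_of_le (hexp _ (by simp [abs_mul])) (hexp _ (by simp [abs_mul]))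

end Theta

/-! ### The rescaled heat integrand -/

section Integrand

variable {r t : ℝ}

lemma mul_sub_sq_le_min {A : ℝ} (hA : 0 ≤ A) (ht : 0 ≤ t) (htA : √t * A ≤ 1) (s : ℝ) :
    t * (A * |s| - A ^ 2) ≤ min ((√t * s) ^ 2) |√t * s| := by
  have hsq : √t * √t = t := mul_self_sqrt ht
  apply le_min
  · rw [mul_pow, sq (√t), hsq, ← sq_abs s]
    refine mul_le_mul_of_nonneg_left ?_ ht
    nlinarith [sq_nonneg (|s| - A), mul_nonneg hA (abs_nonneg s)]
  · calc t * (A * |s| - A ^ 2) ≤ t * (A * |s|) := by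
          gcongr
          exact sub_le_self _ (sq_nonneg A)
      _ = √t * A * (√t * |s|) := by linear_combination -(A * |s|) * hsq
      _ ≤ 1 * (√t * |s|) := by gcongr
      _ = |√t * s| := by rw [one_mul, abs_mul, abs_of_nonneg (sqrt_nonneg t)]

lemma exists_action_div_le (hr : r ∈ Ioo 0 (π / 2)) :
    ∃ M : ℝ, ∀ᶠ t in 𝓝[>] 0, ∀ s a b : ℝ,
      ‖Complex.cos (a + b * Complex.I) - (cos r * cosh (√t * s) : ℝ)‖ ≤ t →
        (r ^ 2 - t * s ^ 2 - a ^ 2 + b ^ 2) / (4 * t) ≤ M - 4 * |s| := by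
  obtain ⟨κ, M, hκ, hgap⟩ := exists_sq_add_mul_min_sub_le hr
  obtain ⟨A, hA, hκA⟩ : ∃ A, 0 < A ∧ κ * A = 16 := ⟨16 / κ, by positivity, by field_simp⟩
  have htA : ∀ᶠ t in 𝓝[>] (0 : ℝ), √t * A ≤ 1 := by
    have hlim : Tendsto (fun t ↦ √t * A) (𝓝[>] 0) (𝓝 (√0 * A)) :=
      ((continuous_sqrt.mul_const A).tendsto 0).mono_left nhdsWithin_le_nhds
    rw [sqrt_zero, zero_mul] at hlim
    exact (hlim.eventually_lt_const one_pos).mono fun _ ↦ le_of_lt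
  refine ⟨M / 4 + κ * A ^ 2 / 4, ?_⟩
  filter_upwards [hgap, htA, self_mem_nhdsWithin] with t hgap htA (ht : 0 < t) s a b hw
  have haction := hgap (√t * s) a b hw
  have hmin := mul_le_mul_of_nonneg_left (mul_sub_sq_le_min hA.le ht.le htA s) hκ.le
  have hexpand : κ * (t * (A * |s| - A ^ 2)) = 16 * t * |s| - κ * A ^ 2 * t := by
    rw [← hκA]
    ring
  rw [mul_pow, sq_sqrt ht.le] at haction hmin
  rw [div_le_iff₀ (by positivity)]
  linarith

lemma abs_mul_sinh_div_sqrt_le (ht : 0 < t) (ht1 : t ≤ 1) (s : ℝ) :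
    |s * (sinh (√t * s) / √t)| ≤ 2 * rexp (2 * |s|) := by
  have hpos : 0 < √t := sqrt_pos.2 ht
  have hcosh : cosh (√t * |s|) ≤ rexp |s| := by
    have hle : √t * |s| ≤ |s| := mul_le_of_le_one_left (abs_nonneg s) (sqrt_le_one.2 ht1)
    calc cosh (√t * |s|) ≤ cosh |s| :=
          cosh_le_cosh.2 (abs_le_abs_of_nonneg (by positivity) hle)
      _ ≤ rexp |s| := by
          rw [← cosh_add_sinh]
          exact le_add_of_nonneg_right (sinh_nonneg_iff.2 (abs_nonneg s))
  have hsinh : |sinh (√t * s)| / √t ≤ |s| * rexp |s| := by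
    rw [div_le_iff₀ hpos, abs_sinh, abs_mul, abs_of_pos hpos]
    calc sinh (√t * |s|) ≤ √t * |s| * cosh (√t * |s|) := sinh_le_mul_cosh (by positivity)
      _ ≤ √t * |s| * rexp |s| := by gcongr
      _ = |s| * rexp |s| * √t := by ring
  have hquad : |s| * |s| ≤ 2 * rexp |s| := by
    linarith [quadratic_le_exp_of_nonneg (abs_nonneg s), sq |s|, abs_nonneg s]
  calc |s * (sinh (√t * s) / √t)| = |s| * (|sinh (√t * s)| / √t) := by
        rw [abs_mul, abs_div, abs_of_pos hpos]
    _ ≤ |s| * (|s| * rexp |s|) := by gcongr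
    _ = |s| * |s| * rexp |s| := by ring
    _ ≤ 2 * rexp |s| * rexp |s| := by gcongr
    _ = 2 * rexp (2 * |s|) := by rw [mul_assoc, ← exp_add, two_mul |s|]

/-- The point at angle `φ` on the circle of radius `t` around `cos r * cosh (√t * s)`, over which
Cauchy's formula for the derivatives of `chebyshevTheta` is taken. -/
noncomputable def circlePoint (r t s φ : ℝ) : ℂ :=
  ((cos r * cosh (√t * s) : ℝ) : ℂ) + t * Complex.exp (φ * Complex.I)

lemma norm_circlePoint_sub (ht : 0 ≤ t) (s φ : ℝ) :
    ‖circlePoint r t s φ - (cos r * cosh (√t * s) : ℝ)‖ = t := by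
  rw [circlePoint, add_sub_cancel_left, norm_mul, Complex.norm_exp_ofReal_mul_I, mul_one,
    Complex.norm_of_nonneg ht]

lemma circlePoint_re_pos (ht : 0 ≤ t) (htr : t < cos r) (s φ : ℝ) :
    0 < (circlePoint r t s φ).re := by
  have hre := (Complex.abs_re_le_norm _).trans (norm_circlePoint_sub (r := r) ht s φ).le
  rw [Complex.sub_re, Complex.ofReal_re] at hre
  have hcosh : cos r ≤ cos r * cosh (√t * s) :=
    le_mul_of_one_le_right (ht.trans htr.le) (one_le_cosh _)
  linarith [(abs_le.1 hre).1]

lemma exists_cos_eq_circlePoint (ht : 0 ≤ t) (htr : t < cos r) (s φ : ℝ) :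
    ∃ a b : ℝ, |a| ≤ π / 2 ∧ Complex.cos (a + b * Complex.I) = circlePoint r t s φ :=
  exists_cos_add_mul_I_eq (circlePoint_re_pos ht htr s φ)

/-- The theta series along the circle of `circlePoint`, with the Gaussian weight of the rescaled
variable `y = √t * s` and normalized by its expected size `e^{-r²/4t}` so that it converges as
`t → 0`. -/
noncomputable def heatIntegrand (r t s φ : ℝ) : ℂ :=
  ((s * (sinh (√t * s) / √t) : ℝ) : ℂ) *
    ((rexp (r ^ 2 / (4 * t)) * rexp (-s ^ 2 / 4) * √(t / π) : ℝ) : ℂ) *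
    chebyshevTheta t (circlePoint r t s φ)

lemma sqrt_div_mul_sqrt_div {x y : ℝ} (hx : 0 < x) (hy : 0 < y) : √(x / y) * √(y / x) = 1 := by
  rw [← sqrt_mul (by positivity), div_mul_div_cancel₀ hy.ne', div_self hx.ne', sqrt_one]

lemma heatIntegrand_eq_of_cos_eq (ht : 0 < t) {s φ : ℝ} {ζ : ℂ}
    (hζ : Complex.cos ζ = circlePoint r t s φ) :
    heatIntegrand r t s φ = ((s * (sinh (√t * s) / √t) : ℝ) : ℂ) *
      Complex.exp (((r ^ 2 - t * s ^ 2 : ℝ) - ζ ^ 2) / (4 * t)) * dualTheta t ζ := by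
  have htc : (t : ℂ) ≠ 0 := by exact_mod_cast ht.ne'
  have hsqrt : ((√(t / π) : ℝ) : ℂ) * ((√(π / t) : ℝ) : ℂ) = 1 := by
    exact_mod_cast sqrt_div_mul_sqrt_div ht pi_pos
  have hexp : Complex.exp (((r ^ 2 - t * s ^ 2 : ℝ) - ζ ^ 2) / (4 * t)) =
      ((rexp (r ^ 2 / (4 * t)) * rexp (-s ^ 2 / 4) : ℝ) : ℂ) *
        Complex.exp (-ζ ^ 2 / (4 * t)) := by
    rw [← exp_add, Complex.ofReal_exp, ← Complex.exp_add]
    congr 1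
    push_cast
    field_simp
    ring
  rw [heatIntegrand, ← hζ, chebyshevTheta_cos ht, hexp, Complex.ofReal_mul _ (√(t / π))]
  linear_combination ((s * (sinh (√t * s) / √t) : ℝ) : ℂ) *
    ((rexp (r ^ 2 / (4 * t)) * rexp (-s ^ 2 / 4) : ℝ) : ℂ) * Complex.exp (-ζ ^ 2 / (4 * t)) *
    dualTheta t ζ * hsqrt

lemma norm_heatIntegrand_of_cos_eq (ht : 0 < t) {s φ a b : ℝ}
    (hζ : Complex.cos (a + b * Complex.I) = circlePoint r t s φ) :
    ‖heatIntegrand r t s φ‖ = |s * (sinh (√t * s) / √t)| *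
      rexp ((r ^ 2 - t * s ^ 2 - a ^ 2 + b ^ 2) / (4 * t)) *
        ‖dualTheta t (a + b * Complex.I)‖ := by
  have hexponent : (((r ^ 2 - t * s ^ 2 : ℝ) - ((a : ℂ) + b * Complex.I) ^ 2) / (4 * t)).re =
      (r ^ 2 - t * s ^ 2 - a ^ 2 + b ^ 2) / (4 * t) := by
    rw [← Complex.ofReal_ofNat 4, ← Complex.ofReal_mul, Complex.div_ofReal_re, Complex.sub_re,
      Complex.ofReal_re, add_sq, mul_pow, Complex.I_sq]
    congr 1
    simp only [← Complex.ofReal_pow, mul_neg, mul_one, Complex.add_re, Complex.ofReal_re,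
      Complex.mul_re, Complex.re_ofNat, Complex.im_ofNat, Complex.ofReal_im, mul_zero, sub_zero,
      Complex.I_re, Complex.I_im, sub_self, Complex.mul_im, zero_mul, add_zero, Complex.neg_re]
    ring
  rw [heatIntegrand_eq_of_cos_eq ht hζ, norm_mul, norm_mul, Complex.norm_exp, hexponent,
    Complex.norm_real, norm_eq_abs]

lemma exists_norm_heatIntegrand_le (hr : r ∈ Ioo 0 (π / 2)) :
    ∃ C : ℝ, ∀ᶠ t in 𝓝[>] 0, ∀ s φ : ℝ, ‖heatIntegrand r t s φ‖ ≤ C * rexp (-|s|) := by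
  obtain ⟨M, haction⟩ := exists_action_div_le hr
  obtain ⟨C, hC, htheta⟩ := exists_norm_dualTheta_sub_one_le
  have hcos : 0 < cos r := cos_pos_of_mem_Ioo ⟨by linarith [hr.1, pi_pos], hr.2⟩
  refine ⟨2 * rexp M * (1 + C), ?_⟩
  filter_upwards [haction, Ioc_mem_nhdsGT one_pos, Ioo_mem_nhdsGT hcos]
    with t haction ⟨ht, ht1⟩ ⟨_, htr⟩ s φ
  obtain ⟨a, b, ha, hζ⟩ := exists_cos_eq_circlePoint ht.le htr s φ
  have hexponent := haction s a b (hζ ▸ (norm_circlePoint_sub ht.le s φ).le)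
  have hdual : ‖dualTheta t (a + b * Complex.I)‖ ≤ 1 + C := by
    have hone : rexp (-(π / t / 2)) ≤ 1 := exp_le_one_iff.2 (neg_nonpos.2 (by positivity))
    have hsub := htheta t ht ht1 (a + b * Complex.I) (by simpa using ha)
    calc ‖dualTheta t (a + b * Complex.I)‖ ≤ ‖(1 : ℂ)‖ + ‖dualTheta t (a + b * Complex.I) - 1‖ :=
          norm_le_norm_add_norm_sub' _ _
      _ ≤ 1 + C := by
          rw [norm_one]
          gcongr
          exact hsub.trans (mul_le_of_le_one_right hC.le hone)
  rw [norm_heatIntegrand_of_cos_eq ht hζ]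
  calc _ ≤ 2 * rexp (2 * |s|) * rexp (M - 4 * |s|) * (1 + C) := by
        gcongr
        exact abs_mul_sinh_div_sqrt_le ht ht1 s
    _ = 2 * rexp M * (1 + C) * rexp (-(2 * |s|)) := by
        rw [show -(2 * |s|) = 2 * |s| + (M - 4 * |s|) + -M by ring, exp_add, exp_add, exp_neg]
        field_simp
    _ ≤ 2 * rexp M * (1 + C) * rexp (-|s|) := by
        gcongr
        linarith [abs_nonneg s]

end Integrand

/-! ### Termwise expansion of the heat integrand -/

section ChebyshevTerm

open Polynomial

variable {r t : ℝ}

/-- The contribution of the mode `N` of the theta series to the heat integrand, without the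
normalization of `heatIntegrand`. -/
noncomputable def chebyshevTerm (r t : ℝ) (N : ℤ) (s φ : ℝ) : ℂ :=
  ((√t * s * sinh (√t * s) * rexp (-s ^ 2 / 4) : ℝ) : ℂ) *
    (Complex.exp (-(N : ℂ) ^ 2 * t) * (Chebyshev.T ℂ N).eval (circlePoint r t s φ))

lemma hasSum_chebyshevTerm (ht : 0 < t) (r s φ : ℝ) :
    HasSum (fun N : ℤ ↦ chebyshevTerm r t N s φ)
      (((t * rexp (-(r ^ 2 / (4 * t))) * √(π / t) : ℝ) : ℂ) * heatIntegrand r t s φ) := by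
  have hsqrt : √(π / t) * √(t / π) = 1 := sqrt_div_mul_sqrt_div pi_pos ht
  have hexp : rexp (-(r ^ 2 / (4 * t))) * rexp (r ^ 2 / (4 * t)) = 1 := by
    rw [← exp_add, neg_add_cancel, exp_zero]
  have hweight : t * rexp (-(r ^ 2 / (4 * t))) * √(π / t) * (s * (sinh (√t * s) / √t) *
      (rexp (r ^ 2 / (4 * t)) * rexp (-s ^ 2 / 4) * √(t / π))) =
      √t * s * sinh (√t * s) * rexp (-s ^ 2 / 4) := by
    calc _ = t / √t * s * sinh (√t * s) * rexp (-s ^ 2 / 4) *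
          (rexp (-(r ^ 2 / (4 * t))) * rexp (r ^ 2 / (4 * t))) * (√(π / t) * √(t / π)) := by ring
      _ = _ := by rw [hexp, hsqrt, div_sqrt, mul_one, mul_one]
  have hsum := (hasSum_chebyshevTheta ht (circlePoint r t s φ)).mul_left
    ((√t * s * sinh (√t * s) * rexp (-s ^ 2 / 4) : ℝ) : ℂ)
  have hvalue : ((t * rexp (-(r ^ 2 / (4 * t))) * √(π / t) : ℝ) : ℂ) * heatIntegrand r t s φ =
      ((√t * s * sinh (√t * s) * rexp (-s ^ 2 / 4) : ℝ) : ℂ) *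
        chebyshevTheta t (circlePoint r t s φ) := by
    rw [heatIntegrand, ← hweight, ← mul_assoc, ← Complex.ofReal_mul, ← Complex.ofReal_mul]
  rw [hvalue]
  exact hsum

lemma two_mul_sub_sq_add_two_mul_mul_le {σ β M : ℝ} (hσ : 0 ≤ σ)
    (h : β ^ 2 ≤ M - 4 * σ + σ ^ 2 / 4) (x : ℝ) :
    2 * σ - σ ^ 2 / 4 - x ^ 2 + 2 * x * β ≤ 2 * |M| + 2 - x - σ := by
  have hM := le_abs_self M
  have hβ : β ≤ σ / 2 + (|M| + 1) := by
    refine abs_le_of_sq_le_sq' (h.trans ?_) (by positivity) |>.2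
    nlinarith [abs_nonneg M, mul_nonneg hσ (abs_nonneg M)]
  linarith [two_mul_le_add_sq x (β + 1 / 2), add_sq β (1 / 2)]

lemma abs_mul_sinh_mul_exp_le (ht : 0 < t) (ht1 : t ≤ 1) (s : ℝ) :
    |√t * s * sinh (√t * s) * rexp (-s ^ 2 / 4)| ≤ 2 * rexp (2 * |s|) * rexp (-s ^ 2 / 4) := by
  have hrescale : √t * s * sinh (√t * s) = t * (s * (sinh (√t * s) / √t)) := by
    have hsq : √t * √t = t := mul_self_sqrt ht.le
    have hpos : √t ≠ 0 := (sqrt_pos.2 ht).ne'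
    field_simp
    linear_combination s * sinh (√t * s) * hsq
  rw [abs_mul, abs_of_pos (exp_pos _), hrescale, abs_mul, abs_of_pos ht]
  refine mul_le_mul_of_nonneg_right ?_ (exp_pos _).le
  exact (mul_le_of_le_one_left (abs_nonneg _) ht1).trans (abs_mul_sinh_div_sqrt_le ht ht1 s)

lemma norm_chebyshevTerm_le_of_cos_eq (ht : 0 < t) (ht1 : t ≤ 1) {N : ℤ} {s φ a b : ℝ}
    (hζ : Complex.cos (a + b * Complex.I) = circlePoint r t s φ) :
    ‖chebyshevTerm r t N s φ‖ ≤
      2 * rexp (2 * |s| - |s| ^ 2 / 4 - (|(N : ℝ)| * √t) ^ 2 + |(N : ℝ)| * |b|) := by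
  have hcheb := norm_chebyshevT_eval_cos_le N (a + b * Complex.I)
  have him : ((a : ℂ) + b * Complex.I).im = b := by simp
  have hexp : ‖Complex.exp (-(N : ℂ) ^ 2 * t)‖ = rexp (-(N : ℝ) ^ 2 * t) := by
    rw [Complex.norm_exp]
    norm_cast
  rw [him] at hcheb
  rw [chebyshevTerm, ← hζ, norm_mul, norm_mul, hexp, Complex.norm_real, norm_eq_abs]
  calc _ ≤ 2 * rexp (2 * |s|) * rexp (-s ^ 2 / 4) *
        (rexp (-(N : ℝ) ^ 2 * t) * rexp (|(N : ℝ)| * |b|)) := by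
        gcongr
        exact abs_mul_sinh_mul_exp_le ht ht1 s
    _ = 2 * rexp (2 * |s| + -s ^ 2 / 4 + (-(N : ℝ) ^ 2 * t + |(N : ℝ)| * |b|)) := by
        rw [exp_add, exp_add, exp_add]
        ring
    _ = _ := by
        rw [sq_abs, mul_pow, sq_abs, sq_sqrt ht.le]
        ring_nf

lemma eventually_exists_norm_chebyshevTerm_le (hr : r ∈ Ioo 0 (π / 2)) :
    ∀ᶠ t in 𝓝[>] 0, ∃ C η : ℝ, 0 < η ∧ ∀ (N : ℤ) (s φ : ℝ),
      ‖chebyshevTerm r t N s φ‖ ≤ C * rexp (-(η * |(N : ℝ)|)) * rexp (-|s|) := by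
  obtain ⟨M, haction⟩ := exists_action_div_le hr
  have hcos : 0 < cos r := cos_pos_of_mem_Ioo ⟨by linarith [hr.1, pi_pos], hr.2⟩
  filter_upwards [haction, Ioc_mem_nhdsGT one_pos, Ioo_mem_nhdsGT hcos]
    with t haction ⟨ht, ht1⟩ ⟨_, htr⟩
  have hpos : 0 < √t := sqrt_pos.2 ht
  set M' := M + (π / 2) ^ 2 / (4 * t)
  refine ⟨2 * rexp (2 * |M'| + 2), √t, hpos, fun N s φ ↦ ?_⟩
  obtain ⟨a, b, ha, hζ⟩ := exists_cos_eq_circlePoint ht.le htr s φ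
  have hgap := haction s a b (hζ ▸ (norm_circlePoint_sub ht.le s φ).le)
  have hb : (|b| / (2 * √t)) ^ 2 ≤ M' - 4 * |s| + |s| ^ 2 / 4 := by
    have ha2 : a ^ 2 ≤ (π / 2) ^ 2 := sq_le_sq.2 (by rwa [abs_of_pos pi_div_two_pos])
    have ha2' : a ^ 2 / (4 * t) ≤ (π / 2) ^ 2 / (4 * t) := by gcongr
    have hr2 : 0 ≤ r ^ 2 / (4 * t) := by positivity
    have hsplit : (r ^ 2 - t * s ^ 2 - a ^ 2 + b ^ 2) / (4 * t) =
        r ^ 2 / (4 * t) - s ^ 2 / 4 - a ^ 2 / (4 * t) + b ^ 2 / (4 * t) := by field_simp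
    rw [div_pow, mul_pow, sq_sqrt ht.le, sq_abs, sq_abs]
    norm_num only
    linarith
  refine (norm_chebyshevTerm_le_of_cos_eq ht ht1 hζ).trans ?_
  rw [mul_assoc, mul_assoc, ← exp_add, ← exp_add]
  refine mul_le_mul_of_nonneg_left (exp_le_exp.2 ?_) zero_le_two
  have hexponent := two_mul_sub_sq_add_two_mul_mul_le (abs_nonneg s) hb (|(N : ℝ)| * √t)
  have hcross : 2 * (|(N : ℝ)| * √t) * (|b| / (2 * √t)) = |(N : ℝ)| * |b| := by field_simp
  linarith

end ChebyshevTerm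

/-! ### Pointwise limit of the heat integrand -/

section PointwiseLimit

variable {r : ℝ}

lemma tendsto_sinh_sqrt_mul_div_sqrt (k : ℝ) :
    Tendsto (fun t ↦ sinh (√t * k) / √t) (𝓝[>] 0) (𝓝 k) := by
  have hderiv : HasDerivAt (fun u ↦ sinh (u * k)) k 0 := by
    simpa using ((hasDerivAt_id (0 : ℝ)).mul_const k).sinh
  have hsqrt : Tendsto (fun t ↦ √t) (𝓝[>] 0) (𝓝[≠] 0) := by
    refine tendsto_nhdsWithin_iff.2 ⟨?_, ?_⟩
    · simpa using (continuous_sqrt.tendsto 0).mono_left (nhdsWithin_le_nhds (s := Ioi 0))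
    · filter_upwards [self_mem_nhdsWithin] with t ht using (sqrt_pos.2 ht).ne'
  refine (hderiv.tendsto_slope_zero.comp hsqrt).congr fun t ↦ ?_
  simp [div_eq_inv_mul]

lemma hasDerivWithinAt_cosh_sqrt_mul (k : ℝ) :
    HasDerivWithinAt (fun t ↦ cosh (√t * k)) (k ^ 2 / 2) (Ioi 0) 0 := by
  rw [hasDerivWithinAt_iff_tendsto_slope' self_notMem_Ioi]
  have hlim := ((tendsto_sinh_sqrt_mul_div_sqrt (k / 2)).pow 2).const_mul 2
  rw [show 2 * (k / 2) ^ 2 = k ^ 2 / 2 by ring] at hlim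
  refine hlim.congr' ?_
  filter_upwards [self_mem_nhdsWithin] with t (ht : 0 < t)
  have hhalf : cosh (√t * k) = cosh (√t * (k / 2)) ^ 2 + sinh (√t * (k / 2)) ^ 2 := by
    rw [← cosh_two_mul]
    ring_nf
  rw [slope_def_field, hhalf, cosh_sq, div_pow, sq_sqrt ht.le, sqrt_zero, zero_mul, cosh_zero]
  ring

lemma circlePoint_zero (r s φ : ℝ) : circlePoint r 0 s φ = Complex.cos r := by
  simp [circlePoint]

lemma hasDerivWithinAt_circlePoint (r s φ : ℝ) :
    HasDerivWithinAt (fun t ↦ circlePoint r t s φ)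
      ((cos r * (s ^ 2 / 2) : ℝ) + Complex.exp (φ * Complex.I)) (Ioi 0) 0 := by
  have hcenter := ((hasDerivWithinAt_cosh_sqrt_mul s).const_mul (cos r)).ofReal_comp
  have hradius := (hasDerivWithinAt_id (0 : ℝ) (Ioi 0)).ofReal_comp.mul_const
    (Complex.exp (φ * Complex.I))
  refine (hcenter.add hradius).congr_deriv ?_
  rw [Complex.ofReal_one, one_mul]

lemma exists_local_arccos {z : ℂ} (hz : Complex.sin z ≠ 0) :
    ∃ g : ℂ → ℂ, g (Complex.cos z) = z ∧ HasDerivAt g (-Complex.sin z)⁻¹ (Complex.cos z) ∧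
      ∀ᶠ w in 𝓝 (Complex.cos z), Complex.cos (g w) = w := by
  have hcos := Complex.hasStrictDerivAt_cos z
  have hne : -Complex.sin z ≠ 0 := neg_ne_zero.2 hz
  exact ⟨hcos.localInverse _ _ _ hne, (hcos.eventually_left_inverse hne).self_of_nhds,
    (hcos.to_localInverse hne).hasDerivAt, hcos.eventually_right_inverse hne⟩

lemma tendsto_dualTheta {ζ : ℝ → ℂ} {z : ℂ} (hζ : Tendsto ζ (𝓝[>] 0) (𝓝 z))
    (hz : |z.re| < π / 2) : Tendsto (fun t ↦ dualTheta t (ζ t)) (𝓝[>] 0) (𝓝 1) := by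
  obtain ⟨C, -, hC⟩ := exists_norm_dualTheta_sub_one_le
  have hre : ∀ᶠ t in 𝓝[>] 0, |(ζ t).re| < π / 2 :=
    ((Complex.continuous_re.tendsto z).comp hζ).abs.eventually_lt_const hz
  have hbound : Tendsto (fun t ↦ C * rexp (-(π / t / 2))) (𝓝[>] 0) (𝓝 0) := by
    have hinv : Tendsto (fun t : ℝ ↦ π / 2 * t⁻¹) (𝓝[>] 0) atTop :=
      tendsto_inv_nhdsGT_zero.const_mul_atTop pi_div_two_pos
    have hlim := (tendsto_exp_neg_atTop_nhds_zero.comp hinv).const_mul C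
    rw [mul_zero] at hlim
    refine hlim.congr fun t ↦ ?_
    rw [Function.comp_apply, ← div_eq_mul_inv, div_right_comm]
  rw [tendsto_iff_norm_sub_tendsto_zero]
  refine squeeze_zero' (Eventually.of_forall fun _ ↦ norm_nonneg _) ?_ hbound
  filter_upwards [hre, Ioc_mem_nhdsGT one_pos] with t hre ⟨ht, ht1⟩ using hC t ht ht1 _ hre.le

lemma tendsto_action_div {g : ℂ → ℂ} (hgr : g (Complex.cos r) = r)
    (hg : HasDerivAt g (-Complex.sin r)⁻¹ (Complex.cos r)) (s φ : ℝ) :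
    Tendsto (fun t : ℝ ↦ ((r ^ 2 - t * s ^ 2 : ℝ) - g (circlePoint r t s φ) ^ 2) / (4 * t))
      (𝓝[>] 0) (𝓝 ((-((1 - r * cot r) / 4) * s ^ 2 : ℝ) +
        (r / (2 * sin r) : ℝ) * Complex.exp (φ * Complex.I))) := by
  have hangle := HasDerivAt.comp_hasDerivWithinAt_of_eq (0 : ℝ) hg
    (hasDerivWithinAt_circlePoint r s φ) (circlePoint_zero r s φ).symm
  have hquad := (((hasDerivWithinAt_id (0 : ℝ) (Ioi 0)).mul_const (s ^ 2)).const_sub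
    (r ^ 2)).ofReal_comp
  have hderiv := (hquad.sub (hangle.fun_pow 2)).div_const 4
  rw [hasDerivWithinAt_iff_tendsto_slope' self_notMem_Ioi] at hderiv
  convert hderiv using 2 with t
  · simp only [slope_def_module, Pi.sub_apply, Function.comp_apply, id_eq, circlePoint_zero, hgr,
      Complex.real_smul]
    push_cast
    field_simp
    ring
  · simp only [Function.comp_apply, circlePoint_zero, hgr, cot_eq_cos_div_sin]
    push_cast
    ring

lemma tendsto_heatIntegrand (hr : r ∈ Ioo 0 (π / 2)) (s φ : ℝ) :
    Tendsto (fun t ↦ heatIntegrand r t s φ) (𝓝[>] 0)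
      (𝓝 (((s ^ 2 * rexp (-((1 - r * cot r) / 4) * s ^ 2) : ℝ) : ℂ) *
        Complex.exp ((r / (2 * sin r) : ℝ) * Complex.exp (φ * Complex.I)))) := by
  have hsin : Complex.sin r ≠ 0 := by
    exact_mod_cast (sin_pos_of_pos_of_lt_pi hr.1 (by linarith [hr.2, pi_pos])).ne'
  obtain ⟨g, hgr, hg, hcosg⟩ := exists_local_arccos hsin
  have hpoint : Tendsto (fun t ↦ circlePoint r t s φ) (𝓝[>] 0) (𝓝 (Complex.cos r)) := by
    rw [← circlePoint_zero r s φ]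
    exact (hasDerivWithinAt_circlePoint r s φ).continuousWithinAt
  have hangle : Tendsto (fun t ↦ g (circlePoint r t s φ)) (𝓝[>] 0) (𝓝 r) := by
    rw [← hgr]
    exact hg.continuousAt.tendsto.comp hpoint
  have htheta := tendsto_dualTheta hangle (by rw [Complex.ofReal_re, abs_of_pos hr.1]; exact hr.2)
  have hweight := (Complex.continuous_ofReal.tendsto _).comp
    ((tendsto_sinh_sqrt_mul_div_sqrt s).const_mul s)
  have haction := (Complex.continuous_exp.tendsto _).comp (tendsto_action_div hgr hg s φ)
  have hlimit := (hweight.mul haction).mul htheta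
  rw [mul_one, Complex.exp_add, ← Complex.ofReal_exp, ← mul_assoc, ← Complex.ofReal_mul,
    ← sq] at hlimit
  refine hlimit.congr' ?_
  filter_upwards [self_mem_nhdsWithin, hpoint.eventually hcosg] with t (ht : 0 < t) hζ
  rw [heatIntegrand_eq_of_cos_eq ht hζ, Function.comp_apply, Function.comp_apply]

end PointwiseLimit

/-! ### Integration over the circle -/

section CircleIntegration

open Polynomial
open Complex (I)

variable {r t : ℝ}

lemma integral_exp_neg_mul_circleMap {f : ℂ → ℂ} (hf : Differentiable ℂ f) (z : ℂ) (ht : 0 < t)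
    (p : ℕ) : ∫ φ in Ioc 0 (2 * π), Complex.exp (-(p * φ * I)) * f (circleMap z t φ) =
      2 * π * t ^ p / p.factorial * iteratedDeriv p f z := by
  have htc : (t : ℂ) ≠ 0 := by exact_mod_cast ht.ne'
  have hcauchy := DiffContOnCl.circleIntegral_one_div_sub_center_pow_smul ht p
    (hf.diffContOnCl (s := Metric.ball z t))
  have hintegrand (φ : ℝ) : deriv (circleMap z t) φ •
      (1 / (circleMap z t φ - z) ^ (p + 1)) • f (circleMap z t φ) =
      I / t ^ p * (Complex.exp (-(p * φ * I)) * f (circleMap z t φ)) := by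
    have hexp := Complex.exp_ne_zero (φ * I)
    rw [deriv_circleMap, circleMap_sub_center, circleMap_zero, smul_eq_mul, smul_eq_mul,
      Complex.exp_neg, mul_assoc (p : ℂ), Complex.exp_nat_mul]
    field_simp
    ring
  rw [circleIntegral, intervalIntegral.integral_of_le two_pi_pos.le] at hcauchy
  simp only [hintegrand] at hcauchy
  rw [integral_const_mul, smul_eq_mul] at hcauchy
  refine mul_left_cancel₀ (div_ne_zero Complex.I_ne_zero (pow_ne_zero p htc)) (hcauchy.trans ?_)
  field_simp

lemma integrable_exp_neg_abs : Integrable fun s : ℝ ↦ rexp (-|s|) := by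
  rw [← integrableOn_univ, ← Iic_union_Ioi (a := (0 : ℝ))]
  refine IntegrableOn.union ?_ ?_
  · refine (integrableOn_exp_Iic 0).congr_fun (fun x hx ↦ ?_) measurableSet_Iic
    simp [abs_of_nonpos (mem_Iic.1 hx)]
  · refine (integrableOn_exp_neg_Ioi 0).congr_fun (fun x hx ↦ ?_) measurableSet_Ioi
    simp [abs_of_pos (mem_Ioi.1 hx)]

/-- Lebesgue measure on pairs `(s, φ)` with `s` real and `φ` an angle in `(0, 2π]`. -/
noncomputable def stripMeasure : Measure (ℝ × ℝ) :=
  (volume : Measure ℝ).prod (volume.restrict (Ioc 0 (2 * π)))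

lemma integrable_exp_neg_abs_fst : Integrable (fun x : ℝ × ℝ ↦ rexp (-|x.1|)) stripMeasure :=
  integrable_exp_neg_abs.comp_fst _

/-- `chebyshevTerm` against the character `φ ↦ e^{-ipφ}`, which extracts the `p`-th derivative. -/
noncomputable def fourierTerm (p : ℕ) (r t : ℝ) (N : ℤ) (x : ℝ × ℝ) : ℂ :=
  Complex.exp (-(p * x.2 * I)) * chebyshevTerm r t N x.1 x.2

lemma continuous_fourierTerm (p : ℕ) (r t : ℝ) (N : ℤ) : Continuous (fourierTerm p r t N) := by
  have := continuous_sinh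
  have := continuous_cosh
  unfold fourierTerm chebyshevTerm circlePoint
  fun_prop

lemma fourierTerm_neg (p : ℕ) (r t : ℝ) (N : ℤ) (x : ℝ × ℝ) :
    fourierTerm p r t (-N) x = fourierTerm p r t N x := by
  rw [fourierTerm, fourierTerm, chebyshevTerm, chebyshevTerm, Chebyshev.T_neg, Int.cast_neg,
    neg_sq]

lemma norm_exp_neg_mul_I (p : ℕ) (φ : ℝ) : ‖Complex.exp (-(p * φ * I))‖ = 1 := by
  simp [Complex.norm_exp]

lemma norm_fourierTerm (p : ℕ) (r t : ℝ) (N : ℤ) (x : ℝ × ℝ) :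
    ‖fourierTerm p r t N x‖ = ‖chebyshevTerm r t N x.1 x.2‖ := by
  rw [fourierTerm, norm_mul, norm_exp_neg_mul_I, one_mul]

lemma integrable_fourierTerm (p : ℕ) {N : ℤ} {C : ℝ}
    (hC : ∀ s φ, ‖chebyshevTerm r t N s φ‖ ≤ C * rexp (-|s|)) :
    Integrable (fourierTerm p r t N) stripMeasure := by
  refine (integrable_exp_neg_abs_fst.const_mul C).mono'
    (continuous_fourierTerm p r t N).aestronglyMeasurable (Eventually.of_forall fun x ↦ ?_)
  exact (norm_fourierTerm p r t N x).trans_le (hC x.1 x.2)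

lemma hasSum_fourierTerm (p : ℕ) (ht : 0 < t) (x : ℝ × ℝ) :
    HasSum (fun N ↦ fourierTerm p r t N x)
      (((t * rexp (-(r ^ 2 / (4 * t))) * √(π / t) : ℝ) : ℂ) *
        (Complex.exp (-(p * x.2 * I)) * heatIntegrand r t x.1 x.2)) := by
  rw [mul_left_comm]
  exact (hasSum_chebyshevTerm ht r x.1 x.2).mul_left _

lemma aestronglyMeasurable_exp_mul_heatIntegrand (p : ℕ) (r : ℝ) (ht : 0 < t) :
    AEStronglyMeasurable (fun x : ℝ × ℝ ↦
      Complex.exp (-(p * x.2 * I)) * heatIntegrand r t x.1 x.2) stripMeasure := by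
  have hne : ((t * rexp (-(r ^ 2 / (4 * t))) * √(π / t) : ℝ) : ℂ) ≠ 0 := by
    exact_mod_cast (by positivity : t * rexp (-(r ^ 2 / (4 * t))) * √(π / t) ≠ 0)
  rw [← aestronglyMeasurable_const_smul_iff₀ hne]
  exact aestronglyMeasurable_of_tendsto_ae (atTop : Filter (Finset ℤ))
    (fun S ↦ (continuous_finsetSum S fun N _ ↦
      continuous_fourierTerm p r t N).aestronglyMeasurable)
    (Eventually.of_forall fun x ↦ hasSum_fourierTerm p ht x)

/-- The integral whose limit as `t → 0⁺` carries the small-time asymptotics: the `p`-th Fourier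
coefficient in `φ` of `heatIntegrand`, integrated over `s`. -/
noncomputable def heatIntegral (p : ℕ) (r t : ℝ) : ℂ :=
  ∫ x, Complex.exp (-(p * x.2 * I)) * heatIntegrand r t x.1 x.2 ∂stripMeasure

lemma hasSum_integral_fourierTerm (p : ℕ) (ht : 0 < t) {C η : ℝ} (hη : 0 < η)
    (hC : ∀ (N : ℤ) (s φ : ℝ),
      ‖chebyshevTerm r t N s φ‖ ≤ C * rexp (-(η * |(N : ℝ)|)) * rexp (-|s|)) :
    HasSum (fun N ↦ ∫ x, fourierTerm p r t N x ∂stripMeasure)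
      (((t * rexp (-(r ^ 2 / (4 * t))) * √(π / t) : ℝ) : ℂ) * heatIntegral p r t) := by
  have hint (N : ℤ) := integrable_fourierTerm p (hC N)
  have hnorm : Summable fun N ↦ ∫ x, ‖fourierTerm p r t N x‖ ∂stripMeasure := by
    refine .of_nonneg_of_le (fun N ↦ integral_nonneg fun x ↦ norm_nonneg _) (fun N ↦ ?_)
      ((summable_exp_neg_mul_abs_int hη).mul_left (C * ∫ x, rexp (-|x.1|) ∂stripMeasure))
    calc ∫ x, ‖fourierTerm p r t N x‖ ∂stripMeasure
        ≤ ∫ x, C * rexp (-(η * |(N : ℝ)|)) * rexp (-|x.1|) ∂stripMeasure :=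
          integral_mono (hint N).norm (integrable_exp_neg_abs_fst.const_mul _) fun x ↦
            (norm_fourierTerm p r t N x).trans_le (hC N x.1 x.2)
      _ = C * (∫ x, rexp (-|x.1|) ∂stripMeasure) * rexp (-(η * |(N : ℝ)|)) := by
          rw [integral_const_mul, mul_right_comm]
  have hsum := hasSum_integral_of_summable_integral_norm hint hnorm
  simp only [(hasSum_fourierTerm p ht _).tsum_eq] at hsum
  rwa [integral_const_mul] at hsum

lemma iterate_derivative_chebyshevT_eval_ofReal (p : ℕ) (N : ℤ) (x : ℝ) :
    (derivative^[p] (Chebyshev.T ℂ N)).eval (x : ℂ) =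
      ((derivative^[p] (Chebyshev.T ℝ N)).eval x : ℝ) := by
  rw [← Chebyshev.map_T Complex.ofRealHom, iterate_derivative_map, eval_map,
    ← Complex.ofRealHom_eq_coe, eval₂_at_apply, Complex.ofRealHom_eq_coe]

lemma integral_fourierTerm (p : ℕ) (ht : 0 < t) {N : ℤ}
    (hint : Integrable (fourierTerm p r t N) stripMeasure) :
    ∫ x, fourierTerm p r t N x ∂stripMeasure =
      ((2 * π * t ^ p / p.factorial * ∫ s, √t * s * sinh (√t * s) * rexp (-s ^ 2 / 4) *
        (rexp (-(N : ℝ) ^ 2 * t) *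
          (derivative^[p] (Chebyshev.T ℝ N)).eval (cos r * cosh (√t * s))) : ℝ) : ℂ) := by
  rw [stripMeasure] at hint ⊢
  rw [integral_prod _ hint, Complex.ofReal_mul, ← integral_complex_ofReal, ← integral_const_mul]
  congr 1 with s
  set z : ℂ := ((cos r * cosh (√t * s) : ℝ) : ℂ)
  have hcauchy := integral_exp_neg_mul_circleMap (Chebyshev.T ℂ N).differentiable z ht p
  have hsplit (φ : ℝ) : fourierTerm p r t N (s, φ) =
      ((√t * s * sinh (√t * s) * rexp (-s ^ 2 / 4) : ℝ) : ℂ) * Complex.exp (-(N : ℂ) ^ 2 * t) *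
        (Complex.exp (-(p * φ * I)) * (Chebyshev.T ℂ N).eval (circleMap z t φ)) := by
    rw [fourierTerm, chebyshevTerm, circlePoint, circleMap]
    ring
  rw [iteratedDeriv_polynomial_eval, iterate_derivative_chebyshevT_eval_ofReal] at hcauchy
  simp only [hsplit]
  rw [integral_const_mul, hcauchy]
  push_cast
  ring

end CircleIntegration

/-! ### Absolute convergence of the kernel -/

section Summability

variable {n : ℕ} {J : ℕ → ℕ → ℕ → ℝ → ℝ} {r t : ℝ}

lemma abs_jacobiFormula_le (α β k : ℕ) {x : ℝ} (hx : x ∈ Ioo (-1 : ℝ) 1) :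
    |jacobiFormula k α β x| ≤ (k + 1) * ((α + β + 2 * k : ℕ) : ℝ) ^ k := by
  have hchoose {a : ℕ} (ha : a ≤ α + β + 2 * k) (b : ℕ) :
      |(a.choose b : ℝ)| ≤ ((α + β + 2 * k : ℕ) : ℝ) ^ b := by
    rw [Nat.abs_cast]
    exact_mod_cast (Nat.choose_le_pow a b).trans (Nat.pow_le_pow_left ha b)
  have hbase : |(1 + x) / 2| ≤ 1 := abs_le.2 ⟨by linarith [hx.1], by linarith [hx.2]⟩
  rw [jacobiFormula_eq_sum_pow α β k hx]
  calc _ ≤ ∑ _e ∈ Finset.range (k + 1), ((α + β + 2 * k : ℕ) : ℝ) ^ k := by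
        refine (Finset.abs_sum_le_sum_abs _ _).trans (Finset.sum_le_sum fun e he ↦ ?_)
        have hek : e ≤ k := Finset.mem_range_succ_iff.1 he
        rw [abs_mul, abs_mul, abs_mul, abs_pow, abs_neg, abs_one, one_pow, one_mul, abs_pow]
        calc _ ≤ 1 * ((α + β + 2 * k : ℕ) : ℝ) ^ e * ((α + β + 2 * k : ℕ) : ℝ) ^ (k - e) := by
              gcongr
              · exact pow_le_one₀ (abs_nonneg _) hbase
              · exact hchoose (by omega) e
              · exact hchoose (Nat.sub_le _ _) (k - e)
          _ = ((α + β + 2 * k : ℕ) : ℝ) ^ k := by rw [one_mul, ← pow_add, Nat.add_sub_cancel' hek]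
    _ = (k + 1) * ((α + β + 2 * k : ℕ) : ℝ) ^ k := by
        rw [Finset.sum_const, Finset.card_range, nsmul_eq_mul, Nat.cast_succ]

lemma summable_add_one_pow_mul_exp_neg (q : ℕ) {a : ℝ} (ha : 0 < a) :
    Summable fun m : ℕ ↦ ((m : ℝ) + 1) ^ q * rexp (-(a * m)) := by
  refine (((summable_nat_add_iff 1).2 (summable_pow_mul_exp_neg_nat_mul q ha)).mul_left
    (rexp a)).congr fun m ↦ ?_
  rw [mul_left_comm, ← exp_add]
  push_cast
  ring_nf

lemma pow_le_exp_mul_sub_log {x : ℝ} (hx : 0 ≤ x) (ht : 0 < t) (k : ℕ) :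
    x ^ k ≤ rexp (k * (x * t - log t)) := by
  rw [exp_nat_mul, exp_sub, exp_log ht]
  refine pow_le_pow_left₀ hx ((le_div_iff₀ ht).2 ?_) k
  linarith [add_one_le_exp (x * t)]

lemma mul_sub_two_mul_sq_le (ht : 0 < t) (a x : ℝ) : a * x - 2 * t * x ^ 2 ≤ a ^ 2 / (8 * t) := by
  rw [le_div_iff₀ (by positivity)]
  linarith [sq_nonneg (4 * t * x - a)]

-- The Gaussian factor `e^{-4k²t}` beats the growth `M ^ k ≤ e^{k(Mt - log t)}` of the Jacobi
-- polynomials, whose leading part is only `e^{2k²t}`.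
lemma exp_mul_pow_le (n m k : ℕ) (ht : 0 < t) :
    rexp (-(4 * ((k : ℝ) * (k + 2 * n + m + 1) + n * m)) * t) *
        (2 * (k : ℝ) + m + 2 * n + 1) ^ k ≤
      rexp (-(4 * n * t * m)) * (rexp ((1 - log t) ^ 2 / (8 * t)) * rexp (-(1 * k))) := by
  calc _ ≤ rexp (-(4 * ((k : ℝ) * (k + 2 * n + m + 1) + n * m)) * t) *
        rexp (k * ((2 * (k : ℝ) + m + 2 * n + 1) * t - log t)) := by
        gcongr
        exact pow_le_exp_mul_sub_log (by positivity) ht k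
    _ ≤ rexp (-(4 * n * t * m) + ((1 - log t) ^ 2 / (8 * t) + -(1 * k))) := by
        rw [← exp_add]
        refine exp_le_exp.2 ?_
        have hsquare := mul_sub_two_mul_sq_le ht (1 - log t) k
        have hrest : 0 ≤ t * k * (6 * n + 3 * m + 3) := by positivity
        linarith
    _ = _ := by rw [exp_add, exp_add]

lemma abs_jacobi_cos_two_mul_le (hn : 1 ≤ n) (hJ : IsJacobi J) (hr : r ∈ Ioo 0 (π / 2))
    (m k : ℕ) :
    |J k (2 * n - 1) (m + 1) (cos (2 * r))| ≤ (k + 1) * (2 * (k : ℝ) + m + 2 * n + 1) ^ k := by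
  rw [(hJ _ _ _).2 _ (cos_two_mul_mem_Ioo hr)]
  refine (abs_jacobiFormula_le _ _ _ (cos_two_mul_mem_Ioo hr)).trans ?_
  rw [show 2 * n - 1 + (m + 1) + 2 * k = 2 * k + m + 2 * n by omega]
  gcongr
  push_cast
  exact (lt_add_one _).le

lemma abs_pTerm_zero_le (hn : 1 ≤ n) (hJ : IsJacobi J) (hr : r ∈ Ioo 0 (π / 2)) (t : ℝ)
    (m k : ℕ) :
    |pTerm n J t r 0 (m, k)| ≤ |Gamma (2 * n) / (2 * π ^ (2 * n + 2))| *
      (2 * (k : ℝ) + m + 2 * n + 1) ^ (2 * n + 3) * (k + 1) *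
        (rexp (-(4 * ((k : ℝ) * (k + 2 * n + m + 1) + n * m)) * t) *
          (2 * (k : ℝ) + m + 2 * n + 1) ^ k) := by
  have hjacobi := abs_jacobi_cos_two_mul_le hn hJ hr m k
  set M : ℝ := 2 * (k : ℝ) + m + 2 * n + 1 with hM
  have hM1 : 1 ≤ M := by linarith
  have hmM : (m : ℝ) + 1 ≤ M := by linarith
  have hcos : 0 ≤ cos r := (cos_pos_of_mem_Ioo ⟨by linarith [hr.1, pi_pos], hr.2⟩).le
  have hchoose : ((k + m + 2 * n).choose (2 * n - 1) : ℝ) ≤ M ^ (2 * n) := by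
    calc ((k + m + 2 * n).choose (2 * n - 1) : ℝ) ≤ ((k + m + 2 * n : ℕ) : ℝ) ^ (2 * n - 1) := by
          exact_mod_cast Nat.choose_le_pow _ _
      _ ≤ M ^ (2 * n - 1) := by
          gcongr
          push_cast
          linarith
      _ ≤ M ^ (2 * n) := pow_le_pow_right₀ hM1 (Nat.sub_le _ _)
  rw [pTerm, vertFactor, if_pos rfl, ← hM, abs_mul, abs_mul, abs_mul, abs_mul, abs_mul, abs_mul,
    abs_mul, abs_exp, Nat.abs_cast, abs_of_nonneg (by positivity : 0 ≤ (m : ℝ) + 1),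
    abs_of_nonneg (zero_le_one.trans hM1), abs_of_nonneg (pow_nonneg hcos m)]
  calc _ ≤ |Gamma (2 * n) / (2 * π ^ (2 * n + 2))| * M * M * M ^ (2 * n) *
        rexp (-(4 * ((k : ℝ) * (k + 2 * n + m + 1) + n * m)) * t) * M * 1 * ((k + 1) * M ^ k) := by
        gcongr
        exact pow_le_one₀ hcos (cos_le_one r)
    _ = _ := by ring

lemma summable_pTerm_zero (hn : 1 ≤ n) (hJ : IsJacobi J) (hr : r ∈ Ioo 0 (π / 2)) (ht : 0 < t) :
    Summable (pTerm n J t r 0) := by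
  have hn1 : (1 : ℝ) ≤ n := by exact_mod_cast hn
  set G := |Gamma (2 * n) / (2 * π ^ (2 * n + 2))|
  have hsum_m := summable_add_one_pow_mul_exp_neg (2 * n + 3) (a := 4 * n * t) (by positivity)
  have hsum_k := (summable_add_one_pow_mul_exp_neg (2 * n + 4) one_pos).mul_left
    (G * (2 * n + 1) ^ (2 * n + 3) * rexp ((1 - log t) ^ 2 / (8 * t)))
  refine .of_norm_bounded (hsum_m.mul_of_nonneg hsum_k (fun m ↦ by positivity)
    fun k ↦ by positivity) ?_
  rintro ⟨m, k⟩
  have hfactor : 2 * (k : ℝ) + m + 2 * n + 1 ≤ (2 * n + 1) * (k + 1) * (m + 1) := by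
    have hnk : 0 ≤ ((n : ℝ) - 1) * k := mul_nonneg (sub_nonneg.2 hn1) k.cast_nonneg
    have hrest : 0 ≤ (2 * n * m + 2 * n * k * m + k * m : ℝ) := by positivity
    linarith [k.cast_nonneg (α := ℝ)]
  calc |pTerm n J t r 0 (m, k)| ≤ _ := abs_pTerm_zero_le hn hJ hr t m k
    _ ≤ G * ((2 * n + 1) * (k + 1) * (m + 1)) ^ (2 * n + 3) * (k + 1) *
        (rexp (-(4 * n * t * m)) * (rexp ((1 - log t) ^ 2 / (8 * t)) * rexp (-(1 * k)))) :=
        mul_le_mul (by gcongr) (exp_mul_pow_le n m k ht) (by positivity) (by positivity)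
    _ = _ := by
        rw [mul_pow, mul_pow]
        ring

lemma preimage_add_two_mul_singleton (j : ℕ) :
    (fun mk : ℕ × ℕ ↦ mk.1 + 2 * mk.2) ⁻¹' {j} =
      ((Finset.range (j / 2 + 1)).image fun k ↦ (j - 2 * k, k) : Finset (ℕ × ℕ)) := by
  ext ⟨m, k⟩
  simp only [Set.mem_preimage, Set.mem_singleton_iff, Finset.coe_image, Set.mem_image,
    Finset.coe_range, Set.mem_Iio, Prod.mk.injEq]
  constructor
  · intro hmk
    refine ⟨k, ?_, ?_, rfl⟩ <;> omega
  · rintro ⟨i, hi, hm, rfl⟩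
    omega

lemma hasSum_sum_range_of_hasSum_prod {E : Type*} [AddCommGroup E] [UniformSpace E]
    [IsUniformAddGroup E] [CompleteSpace E] [T2Space E] {f : ℕ × ℕ → E} {a : E} (hf : HasSum f a) :
    HasSum (fun j ↦ ∑ k ∈ Finset.range (j / 2 + 1), f (j - 2 * k, k)) a := by
  have hfiber := hf.tsum_fiberwise fun mk : ℕ × ℕ ↦ mk.1 + 2 * mk.2
  refine hfiber.congr_fun fun j ↦ ?_
  rw [preimage_add_two_mul_singleton, Finset.tsum_subtype', Finset.sum_image]
  exact fun i _ k _ hik ↦ (Prod.mk.inj hik).2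

end Summability

/-! ### The kernel as an integral -/

section IntegralRepresentation

open Polynomial

variable {n : ℕ} {J : ℕ → ℕ → ℕ → ℝ → ℝ} {r t : ℝ}

lemma hasSum_two_nsmul_nat_add {E : Type*} [AddCommGroup E] [TopologicalSpace E]
    [IsTopologicalAddGroup E] {A : ℤ → E} {S : E} {p : ℕ} (hA : HasSum A S)
    (heven : ∀ N, A (-N) = A N) (hp : 0 < p) (hzero : ∀ N : ℕ, N < p → A N = 0) :
    HasSum (fun j : ℕ ↦ 2 • A ((j + p : ℕ) : ℤ)) S := by
  have hfold := hA.nat_add_neg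
  have hA0 : A 0 = 0 := hzero 0 hp
  simp only [heven, ← two_nsmul, hA0, add_zero] at hfold
  rw [← hasSum_nat_add_iff' p] at hfold
  rwa [Finset.sum_eq_zero fun N hN ↦ by rw [hzero N (Finset.mem_range.1 hN), nsmul_zero],
    sub_zero] at hfold

lemma integral_fourierTerm_eq_zero (ht : 0 < t) {p N : ℕ} (hN : N < p)
    (hint : Integrable (fourierTerm p r t N) stripMeasure) :
    ∫ x, fourierTerm p r t N x ∂stripMeasure = 0 := by
  have hdegree : (Chebyshev.T ℝ N).natDegree < p := by
    rwa [Chebyshev.natDegree_T, Int.natAbs_natCast]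
  rw [integral_fourierTerm p ht hint, iterate_derivative_eq_zero hdegree]
  simp

/-- The ratio between the sum of the terms of the heat kernel with `m + 2k = j` and the integral
of `fourierTerm (2n+1) r t (j+2n+1)`; it does not depend on `j`. -/
noncomputable def fiberConst (n : ℕ) (t : ℝ) : ℝ :=
  rexp ((4 * n ^ 2 + 4 * n) * t) / (2 * π ^ (2 * n + 2)) / 2 ^ (2 * n) / (2 * t) / √(4 * π * t) *
    √t * ((2 * n + 1).factorial / (2 * π * t ^ (2 * n + 1)))

lemma sum_pTerm_zero_eq_integral_fourierTerm (hn : 1 ≤ n) (hJ : IsJacobi J)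
    (hr : r ∈ Ioo 0 (π / 2)) (ht : 0 < t) (j : ℕ)
    (hint : Integrable (fourierTerm (2 * n + 1) r t (j + (2 * n + 1) : ℕ)) stripMeasure) :
    ((∑ k ∈ Finset.range (j / 2 + 1), pTerm n J t r 0 (j - 2 * k, k) : ℝ) : ℂ) =
      fiberConst n t *
        ∫ x, fourierTerm (2 * n + 1) r t (j + (2 * n + 1) : ℕ) x ∂stripMeasure := by
  have hsqrt : 0 < √t := sqrt_pos.2 ht
  have hrescale := Measure.integral_comp_mul_left (fun y ↦ y * sinh y * rexp (-y ^ 2 / (4 * t)) *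
    (derivative^[2 * n + 1] (Chebyshev.T ℝ (j + 2 * n + 1 : ℕ))).eval (cos r * cosh y)) √t
  rw [abs_of_pos (by positivity), smul_eq_mul, inv_mul_eq_div, eq_div_iff hsqrt.ne'] at hrescale
  have hexponent (s : ℝ) : -(√t * s) ^ 2 / (4 * t) = -s ^ 2 / 4 := by
    rw [mul_pow, sq_sqrt ht.le]
    field_simp
  simp only [hexponent] at hrescale
  rw [sum_pTerm_zero_eq_integral hn hJ hr ht, integral_fourierTerm _ ht hint,
    ← Complex.ofReal_mul, fiberConst, ← hrescale]
  simp only [← add_assoc, Int.cast_natCast,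
    mul_left_comm _ (rexp (-((j + 2 * n + 1 : ℕ) : ℝ) ^ 2 * t))]
  rw [integral_const_mul]
  congr 1
  have hfactorial : ((2 * n + 1).factorial : ℝ) ≠ 0 := by positivity
  field_simp

lemma eventually_pKernel_zero_eq_mul_heatIntegral (hn : 1 ≤ n) (hJ : IsJacobi J)
    (hr : r ∈ Ioo 0 (π / 2)) :
    ∀ᶠ t in 𝓝[>] 0, pKernel n J t r 0 =
      fiberConst n t * (t * rexp (-(r ^ 2 / (4 * t))) * √(π / t)) / 2 *
        (heatIntegral (2 * n + 1) r t).re := by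
  filter_upwards [eventually_exists_norm_chebyshevTerm_le hr, self_mem_nhdsWithin] with t hbound ht
  obtain ⟨C, η, hη, hC⟩ := hbound
  have hint (N : ℤ) := integrable_fourierTerm (2 * n + 1) (hC N)
  have hfourier := (hasSum_two_nsmul_nat_add (hasSum_integral_fourierTerm (2 * n + 1) ht hη hC)
    (fun N ↦ by simp only [fourierTerm_neg]) (Nat.succ_pos _)
    fun N hN ↦ integral_fourierTerm_eq_zero ht hN (hint N)).mul_left (fiberConst n t / 2 : ℂ)
  have hkernel := Complex.hasSum_ofReal.2
    (hasSum_sum_range_of_hasSum_prod (summable_pTerm_zero hn hJ hr ht).hasSum)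
  rw [← Complex.re_ofReal_mul, ← Complex.ofReal_re (pKernel n J t r 0), pKernel,
    (hkernel.congr_fun fun j ↦ ?_).unique hfourier]
  · congr 1
    push_cast
    ring
  · rw [sum_pTerm_zero_eq_integral_fourierTerm hn hJ hr ht j (hint _), nsmul_eq_mul]
    push_cast
    ring

end IntegralRepresentation

/-! ### The small-time limit -/

section SmallTimeLimit

open Complex (I)

variable {r t : ℝ}

lemma one_sub_mul_cot_pos (hr : r ∈ Ioo 0 (π / 2)) : 0 < 1 - r * cot r := by
  have hsin : 0 < sin r := sin_pos_of_pos_of_lt_pi hr.1 (by linarith [hr.2, pi_pos])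
  have hcos : 0 < cos r := cos_pos_of_mem_Ioo ⟨by linarith [hr.1, pi_pos], hr.2⟩
  have htan := lt_tan hr.1 hr.2
  rw [tan_eq_sin_div_cos, lt_div_iff₀ hcos] at htan
  rwa [cot_eq_cos_div_sin, sub_pos, ← mul_div_assoc, div_lt_one hsin]

lemma integral_sq_mul_gaussian_mul_exp (p : ℕ) {b : ℝ} (hb : 0 < b) (c : ℝ) :
    ∫ x, Complex.exp (-(p * x.2 * I)) * (((x.1 ^ 2 * rexp (-b * x.1 ^ 2) : ℝ) : ℂ) *
        Complex.exp (c * Complex.exp (x.2 * I))) ∂stripMeasure =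
      ((√(π / b) / (2 * b) * (2 * π / p.factorial * c ^ p) : ℝ) : ℂ) := by
  have hcauchy := integral_exp_neg_mul_circleMap (f := fun z ↦ Complex.exp (c * z))
    (by fun_prop) 0 one_pos p
  simp only [circleMap_zero, Complex.ofReal_one, one_mul, one_pow, mul_one,
    iteratedDeriv_cexp_const_mul, mul_zero, Complex.exp_zero] at hcauchy
  simp only [mul_left_comm (Complex.exp (-(_ * _ * I)))]
  rw [stripMeasure, integral_prod_mul (fun s : ℝ ↦ ((s ^ 2 * rexp (-b * s ^ 2) : ℝ) : ℂ))
    fun φ : ℝ ↦ Complex.exp (-(p * φ * I)) * Complex.exp (c * Complex.exp (φ * I)),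
    integral_complex_ofReal, integral_sq_mul_gaussian hb, hcauchy]
  push_cast
  rfl

lemma tendsto_heatIntegral (p : ℕ) (hr : r ∈ Ioo 0 (π / 2)) :
    Tendsto (heatIntegral p r) (𝓝[>] 0)
      (𝓝 ((√(π / ((1 - r * cot r) / 4)) / (2 * ((1 - r * cot r) / 4)) *
        (2 * π / p.factorial * (r / (2 * sin r)) ^ p) : ℝ) : ℂ)) := by
  obtain ⟨C, hC⟩ := exists_norm_heatIntegrand_le hr
  rw [← integral_sq_mul_gaussian_mul_exp p (by linarith [one_sub_mul_cot_pos hr])]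
  refine tendsto_integral_filter_of_dominated_convergence (fun x ↦ C * rexp (-|x.1|)) ?_ ?_
    (integrable_exp_neg_abs_fst.const_mul C)
    (Eventually.of_forall fun x ↦ (tendsto_heatIntegrand hr x.1 x.2).const_mul _)
  · filter_upwards [self_mem_nhdsWithin] with t ht
    exact aestronglyMeasurable_exp_mul_heatIntegrand p r ht
  · filter_upwards [hC] with t hbound
    refine Eventually.of_forall fun x ↦ ?_
    rw [norm_mul, norm_exp_neg_mul_I, one_mul]
    exact hbound x.1 x.2

lemma rpow_mul_exp_mul_fiberConst (n : ℕ) (r : ℝ) (ht : 0 < t) :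
    (4 * π * t) ^ (2 * (n : ℝ) + 3 / 2) * rexp (r ^ 2 / (4 * t)) *
        (fiberConst n t * (t * rexp (-(r ^ 2 / (4 * t))) * √(π / t)) / 2) =
      rexp ((4 * n ^ 2 + 4 * n) * t) *
        (2 ^ (2 * n) * √π * (2 * n + 1).factorial / (4 * π ^ 2)) := by
  have hrpow : (4 * π * t) ^ (2 * (n : ℝ) + 3 / 2) =
      (2 ^ (2 * n) * 2 ^ (2 * n) * π ^ (2 * n) * t ^ (2 * n)) * (4 * π * t) * √(4 * π * t) := by
    rw [show 2 * (n : ℝ) + 3 / 2 = ((2 * n + 1 : ℕ) : ℝ) + 1 / 2 by push_cast; ring,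
      rpow_add (by positivity), rpow_natCast, ← sqrt_eq_rpow, pow_succ, ← mul_pow, ← mul_pow,
      ← mul_pow]
    norm_num
  have hexp : rexp (r ^ 2 / (4 * t)) * rexp (-(r ^ 2 / (4 * t))) = 1 := by
    rw [← exp_add, add_neg_cancel, exp_zero]
  have hsqrt : √t * √(π / t) = √π := by
    rw [← sqrt_mul ht.le, mul_div_cancel₀ π ht.ne']
  rw [hrpow, fiberConst, pow_add π, pow_succ t]
  calc _ = (rexp (r ^ 2 / (4 * t)) * rexp (-(r ^ 2 / (4 * t)))) * (√t * √(π / t)) *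
        (rexp ((4 * n ^ 2 + 4 * n) * t) *
          (2 ^ (2 * n) * (2 * n + 1).factorial / (4 * π ^ 2))) := by
        field_simp
        ring
    _ = _ := by
        rw [hexp, hsqrt]
        ring

lemma limit_constants_mul_eq_one (n : ℕ) {a κ : ℝ} (ha : a ≠ 0) (hr : r ≠ 0) (hκ : 0 < κ) :
    2 ^ (2 * n) * √π * (2 * n + 1).factorial / (4 * π ^ 2) * (a / r) ^ (2 * n + 1) *
        κ ^ (3 / 2 : ℝ) * (√(π / (κ / 4)) / (2 * (κ / 4)) *
          (2 * π / (2 * n + 1).factorial * (r / (2 * a)) ^ (2 * n + 1))) = 1 := by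
  have hrpow : κ ^ (3 / 2 : ℝ) = κ * √κ := by
    rw [show (3 / 2 : ℝ) = 1 + 1 / 2 by norm_num, rpow_add hκ, rpow_one, ← sqrt_eq_rpow]
  have hsqrt : √(π / (κ / 4)) = 2 * √π / √κ := by
    rw [← sqrt_sq zero_le_two, ← sqrt_mul (by positivity), ← sqrt_div (by positivity)]
    congr 1
    field_simp
    norm_num
  have hratio : (a / r) ^ (2 * n + 1) * (r / (2 * a)) ^ (2 * n + 1) = 1 / (2 ^ (2 * n) * 2) := by
    rw [← mul_pow, show a / r * (r / (2 * a)) = 1 / 2 by field_simp, div_pow, one_pow, pow_succ]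
  rw [hrpow, hsqrt]
  calc _ = ((a / r) ^ (2 * n + 1) * (r / (2 * a)) ^ (2 * n + 1)) * (√π * √π) *
        (2 ^ (2 * n) * 2) / π := by field_simp
    _ = 1 := by
        rw [hratio, mul_self_sqrt pi_pos.le]
        field_simp

end SmallTimeLimit

/-- small-time asymptotics of the subelliptic heat kernel on the horizontal
space: `p_t(r,0) ∼ (4πt)^{-(2n+3/2)} (r/sin r)^{2n+1} e^{-r²/(4t)} (1 - r cot r)^{-3/2}`. -/
theorem stmt_11 (n : ℕ) (hn : 1 ≤ n) (J : ℕ → ℕ → ℕ → ℝ → ℝ) (hJ : IsJacobi J)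
    (r : ℝ) (hr : r ∈ Set.Ioo 0 (π / 2)) :
    Filter.Tendsto (fun t : ℝ =>
      (4 * π * t) ^ (2 * (n : ℝ) + 3 / 2) * (Real.sin r / r) ^ (2 * n + 1) *
        (1 - r * Real.cot r) ^ ((3 : ℝ) / 2) * Real.exp (r ^ 2 / (4 * t)) *
        pKernel n J t r 0)
      (𝓝[>] 0) (𝓝 1) := by
  have hsin : sin r ≠ 0 := (sin_pos_of_pos_of_lt_pi hr.1 (by linarith [hr.2, pi_pos])).ne'
  have hexp : Tendsto (fun t ↦ rexp ((4 * n ^ 2 + 4 * n) * t)) (𝓝[>] 0) (𝓝 1) :=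
    tendsto_nhdsWithin_of_tendsto_nhds <|
      Continuous.tendsto' (by fun_prop) 0 1 (by rw [mul_zero, exp_zero])
  have hintegral := (Complex.continuous_re.tendsto _).comp
    (tendsto_heatIntegral (2 * n + 1) hr)
  have hlimit := (hexp.mul_const (2 ^ (2 * n) * √π * (2 * n + 1).factorial / (4 * π ^ 2) *
    (sin r / r) ^ (2 * n + 1) * (1 - r * cot r) ^ (3 / 2 : ℝ))).mul hintegral
  rw [Complex.ofReal_re, one_mul,
    limit_constants_mul_eq_one n hsin hr.1.ne' (one_sub_mul_cot_pos hr)] at hlimit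
  refine hlimit.congr' ?_
  filter_upwards [eventually_pKernel_zero_eq_mul_heatIntegral hn hJ hr, self_mem_nhdsWithin]
    with t hkernel ht
  rw [hkernel, Function.comp_apply]
  linear_combination -(sin r / r) ^ (2 * n + 1) * (1 - r * cot r) ^ (3 / 2 : ℝ) *
    (heatIntegral (2 * n + 1) r t).re * rpow_mul_exp_mul_fiberConst n r ht
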